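/- arXiv:2305.07572 — 2 statements merged into one kernel-verified Lean document; each statement's English description precedes it below -/
import Mathlib

section
/- (Joint density estimation rate for the MLE.) Let d, k0, k be positive integers with k ≥ k0, let Θ be a compact subset of ℝ^d × S_d^+ × ℝ^d × ℝ × ℝ_{>0}, let β ∈ (0, 1/k], and let G0 ∈ O_{k0,β}(Θ). There exist constants C₁, C₂, C₃ > 0 (depending only on Θ, k, β, G0) such that for every integer n ≥ 2 and every map Ĝ_n from ((ℝ^d × ℝ))^n to O_{k,β}(Θ) satisfying, for every sample s = ((x_1,y_1),…,(x_n,y_n)), Σ_{i=1}^n log p_{Ĝ_n(s)}(x_i, y_i) = sup_{G ∈ O_{k,β}(Θ)} Σ_{i=1}^n log p_G(x_i, y_i), the outer probability, under the n-fold product of the probability measure on ℝ^d × ℝ with density p_{G0}, of the event { s : V(p_{Ĝ_n(s)}, p_{G0}) > C₁ √(log n / n) } is at most C₃ · n^{−C₂}. -/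
open Matrix MeasureTheory

/-- The parameter space `ℝ^d × (d×d matrices) × ℝ^d × ℝ × ℝ` of one expert component. -/
abbrev Param (d : ℕ) : Type :=
  (Fin d → ℝ) × Matrix (Fin d) (Fin d) ℝ × (Fin d → ℝ) × ℝ × ℝ

/-- The univariate Gaussian density with mean `b` and variance `ν`. -/
noncomputable def gauss1 (y b ν : ℝ) : ℝ :=
  (2 * Real.pi * ν) ^ (-(1 : ℝ) / 2) * Real.exp (-((y - b) ^ 2) / (2 * ν))

/-- The `d`-variate Gaussian density with mean `c` and covariance matrix `Γ`. -/
noncomputable def gaussd (d : ℕ) (x c : Fin d → ℝ) (Γ : Matrix (Fin d) (Fin d) ℝ) : ℝ :=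
  (2 * Real.pi) ^ (-(d : ℝ) / 2) * Γ.det ^ (-(1 : ℝ) / 2) *
    Real.exp (-(1 / 2) * ((x - c) ⬝ᵥ (Γ⁻¹ *ᵥ (x - c))))

/-- The joint density of one component:
`F(x, y | (c, Γ, a, b, ν)) = N_d(x; c, Γ) · φ(y; aᵀx + b, ν)`. -/
noncomputable def Fcomp {d : ℕ} (θ : Param d) (x : Fin d → ℝ) (y : ℝ) : ℝ :=
  gaussd d x θ.1 θ.2.1 * gauss1 y (θ.2.2.1 ⬝ᵥ x + θ.2.2.2.1) θ.2.2.2.2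

/-- A finite mixing measure: a number of atoms together with weights and component
parameters. -/
structure Mix (d : ℕ) where
  m : ℕ
  w : Fin m → ℝ
  θ : Fin m → Param d

/-- `G ∈ O_{k,β}(Θ)`: `G` has `1 ≤ m ≤ k` pairwise distinct atoms lying in `Θ`, with
weights `≥ β` summing to one. -/
def Mix.mem {d : ℕ} (G : Mix d) (k : ℕ) (β : ℝ) (Θ : Set (Param d)) : Prop :=
  1 ≤ G.m ∧ G.m ≤ k ∧ (∀ i, G.θ i ∈ Θ) ∧ Function.Injective G.θ ∧
    (∀ i, β ≤ G.w i) ∧ ∑ i, G.w i = 1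

/-- The joint density `p_G(x, y) = Σ_i π_i F(x, y | θ_i)` of a mixing measure. -/
noncomputable def Mix.pdf {d : ℕ} (G : Mix d) (z : (Fin d → ℝ) × ℝ) : ℝ :=
  ∑ i, G.w i * Fcomp (G.θ i) z.1 z.2

/-- The total variation distance `V(p, q) = (1/2)∫|p − q|` between two densities on
`ℝ^d × ℝ`. -/
noncomputable def TV {d : ℕ} (p q : (Fin d → ℝ) × ℝ → ℝ) : ℝ :=
  (1 / 2) * ∫ z, |p z - q z|

/-!
A sample on which `p` is at least as likely as the truth `p₀` has `∏ √(p / p₀) ≥ 1`, so by Markov's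
inequality it occurs with probability at most `A ^ n`, where the Hellinger affinity `A = ∫ √(p p₀)`
satisfies `A ≤ 1 - V(p, p₀)² / 2 ≤ exp (-V(p, p₀)² / 2)`. Replacing `p` by any density whose
logarithm differs from `log p` by at most `w / n` costs only a bounded factor, as long as
`exp (w / 2)` is integrable against an envelope of the densities; hence a union bound over
polynomially many such cells controls the maximum likelihood estimator, and `V ≥ C √(log n / n)`
beats their number.

The logarithms of Gaussian experts are finite sums of bounded functions of the parameter times
polynomials of degree at most two in `z = (x, y)`. Rounding the coefficients to a grid of mesh of
order `1 / n` gives the cells, with `w = c (1 + ‖z‖²)`, and log-sum-exp being 1-Lipschitz in the sup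
norm carries them over to mixtures. Compactness of the parameter set provides the bounds and a
common Gaussian envelope `C exp (-c ‖z‖²)`.
-/

section Densities

variable {Z : Type*} [MeasurableSpace Z] {μ : Measure Z} {p q : Z → ℝ}

/-- A probability density with respect to `μ`, represented by an everywhere nonnegative measurable
function. -/
structure IsProbDensity (μ : Measure Z) (p : Z → ℝ) : Prop where
  measurable : Measurable p
  nonneg : ∀ z, 0 ≤ p z
  integral_eq_one : ∫ z, p z ∂μ = 1

/-- The total variation distance of the measures with `μ`-densities `p` and `q`. -/
noncomputable def densityTV (μ : Measure Z) (p q : Z → ℝ) : ℝ :=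
  (1 / 2) * ∫ z, |p z - q z| ∂μ

theorem IsProbDensity.integrable (hp : IsProbDensity μ p) : Integrable p μ :=
  .of_integral_ne_zero (hp.integral_eq_one.trans_ne one_ne_zero)

theorem IsProbDensity.of_lintegral_eq_one (hm : Measurable p) (h0 : ∀ z, 0 ≤ p z)
    (h1 : ∫⁻ z, ENNReal.ofReal (p z) ∂μ = 1) : IsProbDensity μ p where
  measurable := hm
  nonneg := h0
  integral_eq_one := by
    rw [integral_eq_lintegral_of_nonneg_ae (ae_of_all _ h0) hm.aestronglyMeasurable, h1,
      ENNReal.toReal_one]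

theorem IsProbDensity.isProbabilityMeasure_withDensity (hp : IsProbDensity μ p) :
    IsProbabilityMeasure (μ.withDensity fun z => ENNReal.ofReal (p z)) :=
  ⟨by
    rw [withDensity_apply _ .univ, Measure.restrict_univ,
      ← ofReal_integral_eq_lintegral_ofReal hp.integrable (ae_of_all _ hp.nonneg),
      hp.integral_eq_one, ENNReal.ofReal_one]⟩

theorem IsProbDensity.sum_mul {ι : Type*} [Fintype ι] {p : ι → Z → ℝ}
    (hp : ∀ i, IsProbDensity μ (p i)) {w : ι → ℝ} (hw : ∀ i, 0 ≤ w i) (hw1 : ∑ i, w i = 1) :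
    IsProbDensity μ fun z => ∑ i, w i * p i z where
  measurable := Finset.measurable_fun_sum _ fun i _ => (hp i).measurable.const_mul _
  nonneg z := Finset.sum_nonneg fun i _ => mul_nonneg (hw i) ((hp i).nonneg z)
  integral_eq_one := by
    rw [integral_finsetSum _ fun i _ => (hp i).integrable.const_mul _]
    simp only [integral_const_mul, (hp _).integral_eq_one, mul_one, hw1]

theorem sq_integral_mul_le {f g : Z → ℝ} (hf0 : ∀ z, 0 ≤ f z) (hg0 : ∀ z, 0 ≤ g z)
    (hf : MemLp f 2 μ) (hg : MemLp g 2 μ) :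
    (∫ z, f z * g z ∂μ) ^ 2 ≤ (∫ z, f z ^ 2 ∂μ) * ∫ z, g z ^ 2 ∂μ := by
  have hfg := integral_mul_le_Lp_mul_Lq_of_nonneg (μ := μ) Real.HolderConjugate.two_two
    (ae_of_all _ hf0) (ae_of_all _ hg0) (by simpa using hf) (by simpa using hg)
  simp only [Real.rpow_two, ← Real.sqrt_eq_rpow] at hfg
  have h0 : 0 ≤ ∫ z, f z * g z ∂μ := integral_nonneg fun z => mul_nonneg (hf0 z) (hg0 z)
  calc (∫ z, f z * g z ∂μ) ^ 2 ≤ (√(∫ z, f z ^ 2 ∂μ) * √(∫ z, g z ^ 2 ∂μ)) ^ 2 := by gcongr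
    _ = (∫ z, f z ^ 2 ∂μ) * ∫ z, g z ^ 2 ∂μ := by
      rw [mul_pow, Real.sq_sqrt (integral_nonneg fun z => sq_nonneg _),
        Real.sq_sqrt (integral_nonneg fun z => sq_nonneg _)]

theorem IsProbDensity.memLp_sqrt (hp : IsProbDensity μ p) : MemLp (fun z => √(p z)) 2 μ := by
  rw [memLp_two_iff_integrable_sq hp.measurable.sqrt.aestronglyMeasurable]
  simpa only [Real.sq_sqrt (hp.nonneg _)] using hp.integrable

theorem IsProbDensity.integrable_sqrt_mul_sqrt (hp : IsProbDensity μ p) (hq : IsProbDensity μ q) :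
    Integrable (fun z => √(p z) * √(q z)) μ :=
  hp.memLp_sqrt.integrable_mul hq.memLp_sqrt

-- Cauchy–Schwarz applied to `|p - q| = |√p - √q| (√p + √q)` gives `V² ≤ (1 - A) (1 + A)`, where `A`
-- is the Hellinger affinity.
theorem IsProbDensity.integral_sqrt_mul_sqrt_le (hp : IsProbDensity μ p)
    (hq : IsProbDensity μ q) :
    ∫ z, √(p z) * √(q z) ∂μ ≤ 1 - densityTV μ p q ^ 2 / 2 := by
  set A := ∫ z, √(p z) * √(q z) ∂μ
  have hpq : Integrable (fun z => p z + q z) μ := hp.integrable.add hq.integrable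
  have hA := hp.integrable_sqrt_mul_sqrt hq
  have integral_add_mul (c : ℝ) : ∫ z, p z + q z + c * (√(p z) * √(q z)) ∂μ = 2 + c * A := by
    rw [integral_add hpq (hA.const_mul c), integral_add hp.integrable hq.integrable,
      integral_const_mul, hp.integral_eq_one, hq.integral_eq_one]
    ring
  have sq_sub (z : Z) : |√(p z) - √(q z)| ^ 2 = p z + q z + -2 * (√(p z) * √(q z)) := by
    rw [sq_abs, sub_sq, Real.sq_sqrt (hp.nonneg z), Real.sq_sqrt (hq.nonneg z)]
    ring
  have sq_add (z : Z) : (√(p z) + √(q z)) ^ 2 = p z + q z + 2 * (√(p z) * √(q z)) := by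
    rw [add_sq, Real.sq_sqrt (hp.nonneg z), Real.sq_sqrt (hq.nonneg z)]
    ring
  have abs_factor (z : Z) : |√(p z) - √(q z)| * (√(p z) + √(q z)) = |p z - q z| := by
    rw [← abs_of_nonneg (add_nonneg (Real.sqrt_nonneg (p z)) (Real.sqrt_nonneg (q z))), ← abs_mul,
      mul_comm, ← sq_sub_sq, Real.sq_sqrt (hp.nonneg z), Real.sq_sqrt (hq.nonneg z)]
  have cauchy_schwarz := sq_integral_mul_le (fun z => abs_nonneg (√(p z) - √(q z)))
    (fun z => add_nonneg (Real.sqrt_nonneg (p z)) (Real.sqrt_nonneg (q z)))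
    (hp.memLp_sqrt.sub hq.memLp_sqrt).abs (hp.memLp_sqrt.add hq.memLp_sqrt)
  simp only [abs_factor, sq_sub, sq_add, integral_add_mul] at cauchy_schwarz
  have hA1 : 0 ≤ 2 + -2 * A := by
    rw [← integral_add_mul, ← integral_congr_ae (ae_of_all _ sq_sub)]
    exact integral_nonneg fun z => sq_nonneg _
  have hV : ∫ z, |p z - q z| ∂μ = 2 * densityTV μ p q := by
    rw [densityTV]
    ring
  rw [hV] at cauchy_schwarz
  nlinarith [mul_nonneg hA1 hA1]

end Densities

section LikelihoodRatio

theorem exp_div_natCast_le (a : ℝ) {n : ℕ} (hn : 1 ≤ n) :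
    Real.exp (a / n) ≤ 1 + Real.exp a / n := by
  have hn1 : (n : ℝ)⁻¹ ≤ 1 := inv_le_one_of_one_le₀ (by exact_mod_cast hn)
  have hconv := convexOn_exp.2 (Set.mem_univ a) (Set.mem_univ 0) (inv_nonneg.2 n.cast_nonneg)
    (sub_nonneg.2 hn1) (add_sub_cancel _ _)
  simp only [smul_eq_mul, mul_zero, add_zero, Real.exp_zero, mul_one] at hconv
  rw [div_eq_inv_mul, div_eq_inv_mul]
  linarith [inv_nonneg.2 (n.cast_nonneg : (0 : ℝ) ≤ n)]

variable {Z : Type*} [MeasurableSpace Z] {μ : Measure Z}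

theorem lintegral_exp_div_natCast_mul_le {v g : Z → ℝ} (hg0 : ∀ z, 0 ≤ g z) (hg : Integrable g μ)
    (hvg : Integrable (fun z => Real.exp (v z) * g z) μ) {n : ℕ} (hn : 1 ≤ n) :
    ∫⁻ z, ENNReal.ofReal (Real.exp (v z / n) * g z) ∂μ ≤
      ENNReal.ofReal ((∫ z, g z ∂μ) + (∫ z, Real.exp (v z) * g z ∂μ) / n) := by
  have hsum : Integrable (fun z => g z + Real.exp (v z) * g z / n) μ := hg.add (hvg.div_const _)
  rw [← integral_div, ← integral_add hg (hvg.div_const _),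
    ofReal_integral_eq_lintegral_ofReal hsum
      (ae_of_all _ fun z => add_nonneg (hg0 z) (by have := hg0 z; positivity))]
  refine lintegral_mono fun z => ENNReal.ofReal_le_ofReal ?_
  calc Real.exp (v z / n) * g z ≤ (1 + Real.exp (v z) / n) * g z := by
        gcongr
        exacts [hg0 z, exp_div_natCast_le _ hn]
    _ = g z + Real.exp (v z) * g z / n := by ring

theorem measure_pi_one_le_prod_le {ι : Type*} [Fintype ι] (P : Measure Z) [IsProbabilityMeasure P]
    {g : Z → ENNReal} (hg : Measurable g) :
    Measure.pi (fun _ : ι => P) {s | 1 ≤ ∏ i, g (s i)} ≤ (∫⁻ z, g z ∂P) ^ Fintype.card ι := by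
  have hm (i : ι) : Measurable fun s : ι → Z => g (s i) := hg.comp (measurable_pi_apply i)
  have hindep := ProbabilityTheory.iIndepFun_pi (μ := fun _ : ι => P) (X := fun _ => g)
    fun _ => hg.aemeasurable
  calc Measure.pi (fun _ : ι => P) {s | 1 ≤ ∏ i, g (s i)}
      ≤ ∫⁻ s, ∏ i, g (s i) ∂Measure.pi fun _ : ι => P := by
        simpa using mul_meas_ge_le_lintegral (μ := Measure.pi fun _ : ι => P)
          (Finset.measurable_prod Finset.univ fun i _ => hm i) 1
    _ = ∏ i : ι, ∫⁻ s, g (s i) ∂Measure.pi fun _ : ι => P :=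
        ProbabilityTheory.lintegral_prod_eq_prod_lintegral_of_indepFun Finset.univ _ hindep hm
    _ = (∫⁻ z, g z ∂P) ^ Fintype.card ι := by
        simp only [(measurePreserving_eval (fun _ : ι => P) _).lintegral_comp hg,
          Finset.prod_const, Finset.card_univ]

theorem mul_exp_half_log_sub_log {a b : ℝ} (ha : 0 < a) (hb : 0 < b) (t : ℝ) :
    b * Real.exp ((t + Real.log a - Real.log b) / 2) = Real.exp (t / 2) * (√a * √b) := by
  have exp_half_log {x : ℝ} (hx : 0 < x) : Real.exp (Real.log x / 2) = √x := by
    rw [Real.exp_half, Real.exp_log hx]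
  rw [show (t + Real.log a - Real.log b) / 2 = t / 2 + Real.log a / 2 - Real.log b / 2 by ring,
    Real.exp_sub, Real.exp_add, exp_half_log ha, exp_half_log hb]
  have := Real.sqrt_pos.2 hb
  field_simp
  rw [Real.sq_sqrt hb.le]

variable {p p₀ w : Z → ℝ}

theorem lintegral_sqrt_likelihood_ratio_le (hp : IsProbDensity μ p) (hp₀ : IsProbDensity μ p₀)
    (hpos : ∀ z, 0 < p z) (hpos₀ : ∀ z, 0 < p₀ z) (hw : Measurable w)
    (hint : Integrable (fun z => Real.exp (w z / 2) * (√(p z) * √(p₀ z))) μ)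
    {n : ℕ} (hn : 1 ≤ n) :
    ∫⁻ z, ENNReal.ofReal (Real.exp ((w z / n + Real.log (p z) - Real.log (p₀ z)) / 2))
        ∂μ.withDensity (fun z => ENNReal.ofReal (p₀ z)) ≤
      ENNReal.ofReal (Real.exp (-(densityTV μ p p₀ ^ 2 / 2) +
        (∫ z, Real.exp (w z / 2) * (√(p z) * √(p₀ z)) ∂μ) / n)) := by
  have hmeas : Measurable fun z =>
      ENNReal.ofReal (Real.exp ((w z / n + Real.log (p z) - Real.log (p₀ z)) / 2)) := by
    have := hp.measurable
    have := hp₀.measurable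
    fun_prop
  rw [lintegral_withDensity_eq_lintegral_mul _ hp₀.measurable.ennreal_ofReal hmeas]
  calc _ = ∫⁻ z, ENNReal.ofReal (Real.exp (w z / 2 / n) * (√(p z) * √(p₀ z))) ∂μ := by
        refine lintegral_congr fun z => ?_
        rw [Pi.mul_apply, ← ENNReal.ofReal_mul (hp₀.nonneg z),
          mul_exp_half_log_sub_log (hpos z) (hpos₀ z), div_right_comm]
    _ ≤ _ := lintegral_exp_div_natCast_mul_le (fun z => by positivity)
        (hp.integrable_sqrt_mul_sqrt hp₀) hint hn
    _ ≤ _ := by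
        refine ENNReal.ofReal_le_ofReal (le_trans ?_ (Real.add_one_le_exp _))
        linarith [hp.integral_sqrt_mul_sqrt_le hp₀]

theorem measure_pi_likelihood_le_of_densityTV (hp : IsProbDensity μ p) (hp₀ : IsProbDensity μ p₀)
    (hpos : ∀ z, 0 < p z) (hpos₀ : ∀ z, 0 < p₀ z) (hw : Measurable w)
    (hint : Integrable (fun z => Real.exp (w z / 2) * (√(p z) * √(p₀ z))) μ)
    {n : ℕ} (hn : 1 ≤ n) :
    Measure.pi (fun _ : Fin n => μ.withDensity fun z => ENNReal.ofReal (p₀ z))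
        {s | ∑ i, Real.log (p₀ (s i)) ≤ ∑ i, (Real.log (p (s i)) + w (s i) / n)} ≤
      ENNReal.ofReal (Real.exp (-(n * densityTV μ p p₀ ^ 2 / 2) +
        ∫ z, Real.exp (w z / 2) * (√(p z) * √(p₀ z)) ∂μ)) := by
  have := hp₀.isProbabilityMeasure_withDensity
  set ℓ : Z → ℝ := fun z => (w z / n + Real.log (p z) - Real.log (p₀ z)) / 2
  have hmeas : Measurable fun z => ENNReal.ofReal (Real.exp (ℓ z)) := by
    have := hp.measurable
    have := hp₀.measurable
    fun_prop
  calc _ ≤ Measure.pi (fun _ : Fin n => μ.withDensity fun z => ENNReal.ofReal (p₀ z))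
        {s | 1 ≤ ∏ i, ENNReal.ofReal (Real.exp (ℓ (s i)))} := by
        refine measure_mono fun s hs => ?_
        rw [Set.mem_ofPred_eq] at hs ⊢
        rw [← ENNReal.ofReal_prod_of_nonneg fun i _ => (Real.exp_pos _).le, ← Real.exp_sum,
          ENNReal.one_le_ofReal, Real.one_le_exp_iff, ← Finset.sum_div]
        simp only [Finset.sum_sub_distrib, Finset.sum_add_distrib] at hs ⊢
        linarith
    _ ≤ _ := measure_pi_one_le_prod_le _ hmeas
    _ ≤ _ := pow_le_pow_left' (lintegral_sqrt_likelihood_ratio_le hp hp₀ hpos hpos₀ hw hint hn) _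
    _ = _ := by
        have hn0 : (n : ℝ) ≠ 0 := by positivity
        rw [Fintype.card_fin, ← ENNReal.ofReal_pow (Real.exp_pos _).le, ← Real.exp_nat_mul]
        congr 2
        field_simp

end LikelihoodRatio

section Entropy

variable {ι κ Z : Type*}

/-- Polynomial metric entropy of the family `f` in the norm weighted by `τ`: for every `n ≥ 1` the
index set splits into at most `C * n ^ A` cells on which `f` oscillates by at most `τ / n`. Applied
to the logarithms of densities, it takes the place of bracketing entropy. -/
def HasPolynomialEntropy (f : ι → Z → ℝ) (τ : Z → ℝ) : Prop :=
  ∃ C A : ℕ, ∀ n : ℕ, 1 ≤ n → ∃ (κ : Type) (_ : Fintype κ) (cell : ι → κ),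
    Fintype.card κ ≤ C * n ^ A ∧ ∀ i j, cell i = cell j → ∀ z, |f i z - f j z| ≤ τ z / n

theorem HasPolynomialEntropy.comp {f : ι → Z → ℝ} {τ : Z → ℝ} (hf : HasPolynomialEntropy f τ)
    (φ : κ → ι) : HasPolynomialEntropy (fun i => f (φ i)) τ := by
  obtain ⟨C, A, h⟩ := hf
  refine ⟨C, A, fun n hn => ?_⟩
  obtain ⟨κ', _, cell, hcard, hcell⟩ := h n hn
  exact ⟨κ', _, cell ∘ φ, hcard, fun i j hij => hcell _ _ hij⟩

theorem log_sum_exp_le_add [Fintype κ] {a b : κ → ℝ} {δ : ℝ} (hδ : 0 ≤ δ)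
    (hab : ∀ r, a r ≤ b r + δ) :
    Real.log (∑ r, Real.exp (a r)) ≤ Real.log (∑ r, Real.exp (b r)) + δ := by
  rcases isEmpty_or_nonempty κ with _ | _
  · simpa using hδ
  have sum_exp_pos (c : κ → ℝ) : 0 < ∑ r, Real.exp (c r) :=
    Finset.sum_pos (fun r _ => Real.exp_pos _) Finset.univ_nonempty
  rw [← Real.log_exp δ, ← Real.log_mul (sum_exp_pos b).ne' (Real.exp_pos _).ne', Finset.sum_mul]
  refine Real.log_le_log (sum_exp_pos a) (Finset.sum_le_sum fun r _ => ?_)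
  rw [← Real.exp_add]
  exact Real.exp_le_exp.2 (hab r)

theorem abs_log_sum_exp_sub_le [Fintype κ] {a b : κ → ℝ} {δ : ℝ} (hδ : 0 ≤ δ)
    (hab : ∀ r, |a r - b r| ≤ δ) :
    |Real.log (∑ r, Real.exp (a r)) - Real.log (∑ r, Real.exp (b r))| ≤ δ := by
  rw [abs_sub_le_iff, sub_le_iff_le_add', sub_le_iff_le_add']
  exact ⟨log_sum_exp_le_add hδ fun r => by linarith [(abs_sub_le_iff.1 (hab r)).1],
    log_sum_exp_le_add hδ fun r => by linarith [(abs_sub_le_iff.1 (hab r)).2]⟩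

theorem card_sigma_fin_pi_le [Fintype κ] (k : ℕ) {N : ℕ} (hN : Fintype.card κ ≤ N) (hN1 : 1 ≤ N) :
    Fintype.card (Σ m : Fin (k + 1), (Fin m → κ)) ≤ (k + 1) * N ^ k := by
  calc Fintype.card (Σ m : Fin (k + 1), (Fin m → κ))
      = ∑ m : Fin (k + 1), Fintype.card κ ^ (m : ℕ) := by simp [Fintype.card_sigma]
    _ ≤ ∑ _m : Fin (k + 1), N ^ k := Finset.sum_le_sum fun m _ =>
        (Nat.pow_le_pow_left hN _).trans (Nat.pow_le_pow_right hN1 (Nat.lt_succ_iff.1 m.2))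
    _ = (k + 1) * N ^ k := by simp

theorem HasPolynomialEntropy.log_sum_exp {f : ι → Z → ℝ} {τ : Z → ℝ}
    (hf : HasPolynomialEntropy f τ) (hτ : ∀ z, 0 ≤ τ z) (k : ℕ) :
    HasPolynomialEntropy
      (fun (a : Σ m : Fin (k + 1), (Fin m → ι)) z => Real.log (∑ r, Real.exp (f (a.2 r) z))) τ := by
  obtain ⟨C, A, h⟩ := hf
  refine ⟨(k + 1) * (C + 1) ^ k, A * k, fun n hn => ?_⟩
  obtain ⟨κ, _, cell, hcard, hcell⟩ := h n hn
  refine ⟨Σ m : Fin (k + 1), (Fin m → κ), inferInstance, fun a => ⟨a.1, cell ∘ a.2⟩, ?_, ?_⟩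
  · rw [mul_assoc, pow_mul, ← mul_pow]
    exact card_sigma_fin_pi_le k (hcard.trans (by gcongr; omega))
      (Nat.succ_le_of_lt (Nat.mul_pos C.succ_pos (Nat.pow_pos hn)))
  · rintro ⟨m, a⟩ ⟨m', b⟩ hab z
    obtain ⟨rfl, hab⟩ := Sigma.mk.inj_iff.1 hab
    exact abs_log_sum_exp_sub_le (div_nonneg (hτ z) n.cast_nonneg)
      fun r => hcell _ _ (congrFun (eq_of_heq hab) r) z

/-- `f` is a finite sum `∑ j, η j i * T j z` with bounded coefficients `η j` and with `|T j| ≤ τ`,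
the shape of the log-densities of an exponential family with natural parameters `η` and sufficient
statistics `T`. Unlike polynomial entropy, this property is stable under products. -/
def HasExpFamilyForm (f : ι → Z → ℝ) (τ : Z → ℝ) : Prop :=
  ∃ (J : Type) (_ : Fintype J) (η : J → ι → ℝ) (T : J → Z → ℝ),
    (∀ j, ∃ R, ∀ i, |η j i| ≤ R) ∧ (∀ j z, |T j z| ≤ τ z) ∧ ∀ i z, f i z = ∑ j, η j i * T j z

namespace HasExpFamilyForm

variable {f g : ι → Z → ℝ} {σ τ : Z → ℝ}

theorem of_statistic {T : Z → ℝ} (hT : ∀ z, |T z| ≤ τ z) :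
    HasExpFamilyForm (fun (_ : ι) z => T z) τ :=
  ⟨Unit, inferInstance, fun _ _ => 1, fun _ => T, fun _ => ⟨1, by simp⟩, fun _ => hT, by simp⟩

theorem const_mul (hf : HasExpFamilyForm f τ) {c : ι → ℝ} (hc : ∃ R, ∀ i, |c i| ≤ R) :
    HasExpFamilyForm (fun i z => c i * f i z) τ := by
  obtain ⟨J, _, η, T, hη, hT, hf⟩ := hf
  obtain ⟨R, hR⟩ := hc
  refine ⟨J, inferInstance, fun j i => c i * η j i, T, fun j => ?_, hT, fun i z => ?_⟩
  · obtain ⟨S, hS⟩ := hη j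
    exact ⟨R * S, fun i => (abs_mul _ _).trans_le
      (mul_le_mul (hR i) (hS i) (abs_nonneg _) ((abs_nonneg _).trans (hR i)))⟩
  · simp only [hf, Finset.mul_sum, mul_assoc]

theorem of_parameter {c : ι → ℝ} (hc : ∃ R, ∀ i, |c i| ≤ R) (hτ : ∀ z, 1 ≤ τ z) :
    HasExpFamilyForm (fun i _ => c i) τ := by
  simpa using (of_statistic (T := fun _ => 1) (by simpa using hτ)).const_mul hc

theorem add (hf : HasExpFamilyForm f τ) (hg : HasExpFamilyForm g τ) :
    HasExpFamilyForm (fun i z => f i z + g i z) τ := by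
  obtain ⟨J, _, η, T, hη, hT, hf⟩ := hf
  obtain ⟨J', _, η', T', hη', hT', hg⟩ := hg
  exact ⟨J ⊕ J', inferInstance, Sum.elim η η', Sum.elim T T', Sum.forall.2 ⟨hη, hη'⟩,
    Sum.forall.2 ⟨hT, hT'⟩, by simp [hf, hg]⟩

theorem sub (hf : HasExpFamilyForm f τ) (hg : HasExpFamilyForm g τ) :
    HasExpFamilyForm (fun i z => f i z - g i z) τ := by
  simpa [sub_eq_add_neg] using hf.add (hg.const_mul (c := fun _ => -1) ⟨1, by simp⟩)

theorem sum {K : Type*} (s : Finset K) {f : K → ι → Z → ℝ}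
    (hf : ∀ k ∈ s, HasExpFamilyForm (f k) τ) :
    HasExpFamilyForm (fun i z => ∑ k ∈ s, f k i z) τ := by
  have hzero : HasExpFamilyForm (0 : ι → Z → ℝ) τ :=
    ⟨Empty, inferInstance, nofun, nofun, nofun, nofun, by simp⟩
  convert Finset.sum_induction f (HasExpFamilyForm · τ) (fun _ _ => add) hzero hf
  simp only [Finset.sum_apply]

theorem mul (hf : HasExpFamilyForm f σ) (hg : HasExpFamilyForm g τ) :
    HasExpFamilyForm (fun i z => f i z * g i z) fun z => σ z * τ z := by
  obtain ⟨J, _, η, T, hη, hT, hf⟩ := hf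
  obtain ⟨J', _, η', T', hη', hT', hg⟩ := hg
  have mul_bound {a b A B : ℝ} (ha : |a| ≤ A) (hb : |b| ≤ B) : |a * b| ≤ A * B :=
    (abs_mul _ _).trans_le (mul_le_mul ha hb (abs_nonneg _) ((abs_nonneg _).trans ha))
  refine ⟨J × J', inferInstance, fun j i => η j.1 i * η' j.2 i, fun j z => T j.1 z * T' j.2 z,
    fun j => ?_, fun j z => mul_bound (hT _ z) (hT' _ z), fun i z => ?_⟩
  · obtain ⟨R, hR⟩ := hη j.1
    obtain ⟨R', hR'⟩ := hη' j.2
    exact ⟨R * R', fun i => mul_bound (hR i) (hR' i)⟩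
  · simp only [hf, hg, Finset.sum_mul_sum, Fintype.sum_prod_type]
    exact Finset.sum_congr rfl fun _ _ => Finset.sum_congr rfl fun _ _ => mul_mul_mul_comm _ _ _ _

theorem mono (hf : HasExpFamilyForm f σ) {c : ℝ} (hc : 0 < c) (hτ : ∀ z, σ z ≤ c * τ z) :
    HasExpFamilyForm f τ := by
  obtain ⟨J, _, η, T, hη, hT, hf⟩ := hf
  refine ⟨J, inferInstance, fun j i => c * η j i, fun j z => T j z / c, fun j => ?_, fun j z => ?_,
    fun i z => ?_⟩
  · obtain ⟨R, hR⟩ := hη j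
    exact ⟨c * R, fun i => by rw [abs_mul, abs_of_pos hc]; gcongr; exact hR i⟩
  · rw [abs_div, abs_of_pos hc, div_le_iff₀' hc]
    exact (hT j z).trans (hτ z)
  · rw [hf]
    exact Finset.sum_congr rfl fun j _ => by field_simp

end HasExpFamilyForm

theorem exists_cell_abs_sub_le {x : ι → ℝ} {R : ℕ} (hx : ∀ i, |x i| ≤ R) {n : ℕ} (hn : 1 ≤ n) :
    ∃ cell : ι → Fin ((2 * R + 1) * n), ∀ i j, cell i = cell j → |x i - x j| ≤ 1 / n := by
  have hn0 : (0 : ℝ) < n := by exact_mod_cast hn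
  have shift_nonneg (i : ι) : 0 ≤ (x i + R) * n :=
    mul_nonneg (by linarith [(abs_le.1 (hx i)).1]) hn0.le
  have floor_lt (i : ι) : ⌊(x i + R) * n⌋₊ < (2 * R + 1) * n := by
    rw [Nat.floor_lt (shift_nonneg i)]
    push_cast
    exact mul_lt_mul_of_pos_right (by linarith [(abs_le.1 (hx i)).2]) hn0
  refine ⟨fun i => ⟨⌊(x i + R) * n⌋₊, floor_lt i⟩, fun i j hij => ?_⟩
  have hfloor : (⌊(x i + R) * n⌋₊ : ℝ) = ⌊(x j + R) * n⌋₊ := by exact_mod_cast Fin.mk.inj_iff.1 hij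
  rw [abs_sub_le_iff, le_div_iff₀ hn0, le_div_iff₀ hn0]
  constructor <;>
    linarith [Nat.floor_le (shift_nonneg i), Nat.floor_le (shift_nonneg j),
      Nat.lt_floor_add_one ((x i + R) * n), Nat.lt_floor_add_one ((x j + R) * n)]

theorem HasExpFamilyForm.hasPolynomialEntropy {f : ι → Z → ℝ} {τ : Z → ℝ}
    (hf : HasExpFamilyForm f τ) (hτ : ∀ z, 0 ≤ τ z) : HasPolynomialEntropy f τ := by
  classical
  obtain ⟨J, _, η, T, hη, hT, hf⟩ := hf
  choose R hR using hη
  obtain ⟨M, hM⟩ := Finite.bddAbove_range R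
  have hη (j : J) (i : ι) : |η j i| ≤ (⌈M⌉₊ : ℝ) :=
    (hR j i).trans ((hM ⟨j, rfl⟩).trans (Nat.le_ceil M))
  refine ⟨((2 * ⌈M⌉₊ + 1) * (Fintype.card J + 1)) ^ Fintype.card J, Fintype.card J, fun n hn => ?_⟩
  choose cell hcell using fun j =>
    exists_cell_abs_sub_le (hη j) (n := (Fintype.card J + 1) * n) (Nat.mul_pos (by simp) hn)
  refine ⟨_, inferInstance, fun i j => cell j i, ?_, fun i i' hii' z => ?_⟩
  · rw [Fintype.card_fun, Fintype.card_fin, ← mul_assoc, mul_pow]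
  calc |f i z - f i' z| = |∑ j, (η j i - η j i') * T j z| := by
        simp only [hf, sub_mul, Finset.sum_sub_distrib]
    _ ≤ ∑ _j : J, 1 / ((Fintype.card J + 1) * n) * τ z := by
        refine (Finset.abs_sum_le_sum_abs _ _).trans (Finset.sum_le_sum fun j _ => ?_)
        rw [abs_mul]
        gcongr
        · exact_mod_cast hcell j i i' (congrFun hii' j)
        · exact hT j z
    _ = (Fintype.card J / (Fintype.card J + 1)) * (τ z / n) := by
        rw [Finset.sum_const, Finset.card_univ, nsmul_eq_mul]
        field_simp
    _ ≤ τ z / n := mul_le_of_le_one_left (div_nonneg (hτ z) n.cast_nonneg)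
        ((div_le_one (by positivity)).2 (by linarith))

end Entropy

section MaximumLikelihood

variable {ι Z : Type*} [MeasurableSpace Z] {μ : Measure Z} {p : ι → Z → ℝ} {w : Z → ℝ}

theorem measure_pi_lt_densityTV_le {κ : Type*} [Fintype κ] (hp : ∀ i, IsProbDensity μ (p i))
    (hpos : ∀ i z, 0 < p i z) (hw : Measurable w) {i₀ : ι} {M : ℝ}
    (hint : ∀ i, Integrable (fun z => Real.exp (w z / 2) * (√(p i z) * √(p i₀ z))) μ)
    (hM : ∀ i, ∫ z, Real.exp (w z / 2) * (√(p i z) * √(p i₀ z)) ∂μ ≤ M) {n : ℕ} (hn : 1 ≤ n)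
    {cell : ι → κ}
    (hcell : ∀ i j, cell i = cell j → ∀ z, |Real.log (p i z) - Real.log (p j z)| ≤ w z / n)
    {est : (Fin n → Z) → ι}
    (hest : ∀ s, ∑ k, Real.log (p i₀ (s k)) ≤ ∑ k, Real.log (p (est s) (s k)))
    {ρ : ℝ} (hρ : 0 ≤ ρ) :
    Measure.pi (fun _ : Fin n => μ.withDensity fun z => ENNReal.ofReal (p i₀ z))
        {s | ρ < densityTV μ (p (est s)) (p i₀)} ≤
      ENNReal.ofReal (Fintype.card κ * Real.exp (-(n * ρ ^ 2 / 2) + M)) := by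
  set P := Measure.pi fun _ : Fin n => μ.withDensity fun z => ENNReal.ofReal (p i₀ z)
  set E : κ → Set (Fin n → Z) := fun x =>
    {s | ρ < densityTV μ (p (est s)) (p i₀) ∧ cell (est s) = x}
  have measure_cell_le (x : κ) : P (E x) ≤ ENNReal.ofReal (Real.exp (-(n * ρ ^ 2 / 2) + M)) := by
    rcases (E x).eq_empty_or_nonempty with hE | ⟨s₀, hs₀, rfl⟩
    · simp [hE]
    calc P (E _) ≤ P {s | ∑ k, Real.log (p i₀ (s k)) ≤
            ∑ k, (Real.log (p (est s₀) (s k)) + w (s k) / n)} := by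
          refine measure_mono fun s hs => (hest s).trans (Finset.sum_le_sum fun k _ => ?_)
          linarith [(abs_sub_le_iff.1 (hcell _ _ hs.2 (s k))).1]
      _ ≤ _ := measure_pi_likelihood_le_of_densityTV (hp _) (hp i₀) (hpos _) (hpos i₀) hw
            (hint _) hn
      _ ≤ _ := by
          have hρV : ρ ^ 2 ≤ densityTV μ (p (est s₀)) (p i₀) ^ 2 := by gcongr
          gcongr
          exact hM _
  calc P {s | ρ < densityTV μ (p (est s)) (p i₀)} ≤ P (⋃ x, E x) :=
        measure_mono fun s hs => Set.mem_iUnion.2 ⟨cell (est s), hs, rfl⟩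
    _ ≤ ∑ x, P (E x) := measure_iUnion_fintype_le _ _
    _ ≤ ∑ _x : κ, ENNReal.ofReal (Real.exp (-(n * ρ ^ 2 / 2) + M)) :=
        Finset.sum_le_sum fun x _ => measure_cell_le x
    _ = _ := by
        rw [Finset.sum_const, Finset.card_univ, nsmul_eq_mul,
          ENNReal.ofReal_mul (Nat.cast_nonneg _), ENNReal.ofReal_natCast]

theorem sqrt_mul_sqrt_le_of_le {a b c : ℝ} (ha : 0 ≤ a) (hac : a ≤ c) (hbc : b ≤ c) :
    √a * √b ≤ c :=
  (mul_le_mul (Real.sqrt_le_sqrt hac) (Real.sqrt_le_sqrt hbc) (Real.sqrt_nonneg _)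
    (Real.sqrt_nonneg _)).trans_eq (Real.mul_self_sqrt (ha.trans hac))

theorem natCast_mul_pow_mul_exp_le {N C A n : ℕ} (hN : N ≤ C * n ^ A) (hn : 1 ≤ n) {r : ℝ}
    (hr : 0 ≤ r) (M : ℝ) :
    N * Real.exp (-(n * (√(2 * (A + r)) * √(Real.log n / n)) ^ 2 / 2) + M) ≤
      (C + 1) * Real.exp M * (n : ℝ) ^ (-r) := by
  have hn0 : (0 : ℝ) < n := by exact_mod_cast hn
  have exponent_eq : n * (√(2 * (A + r)) * √(Real.log n / n)) ^ 2 / 2 = Real.log n * (A + r) := by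
    rw [mul_pow, Real.sq_sqrt (by positivity),
      Real.sq_sqrt (div_nonneg (Real.log_natCast_nonneg n) hn0.le)]
    field_simp
  calc _ ≤ (C + 1) * (n : ℝ) ^ A * Real.exp (-(Real.log n * (A + r)) + M) := by
        rw [exponent_eq]
        gcongr
        exact_mod_cast hN.trans (Nat.mul_le_mul_right _ C.le_succ)
    _ = (C + 1) * Real.exp M * (n : ℝ) ^ (-r) := by
        have hrpow : (n : ℝ) ^ A * Real.exp (-(Real.log n * (A + r))) = (n : ℝ) ^ (-r) := by
          rw [← Real.rpow_natCast, Real.rpow_def_of_pos hn0, Real.rpow_def_of_pos hn0,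
            ← Real.exp_add]
          ring_nf
        rw [Real.exp_add, ← hrpow]
        ring

theorem exists_densityTV_rate_of_hasPolynomialEntropy (hp : ∀ i, IsProbDensity μ (p i))
    (hpos : ∀ i z, 0 < p i z) (hw : Measurable w) {e : Z → ℝ} (he : ∀ i z, p i z ≤ e z)
    (hint : Integrable (fun z => Real.exp (w z / 2) * e z) μ)
    (hentropy : HasPolynomialEntropy (fun i z => Real.log (p i z)) w) {r : ℝ} (hr : 0 < r) :
    ∃ C₁ C₃ : ℝ, 0 < C₁ ∧ 0 < C₃ ∧ ∀ (i₀ : ι) (n : ℕ), 1 ≤ n → ∀ est : (Fin n → Z) → ι,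
      (∀ s, ∑ k, Real.log (p i₀ (s k)) ≤ ∑ k, Real.log (p (est s) (s k))) →
      Measure.pi (fun _ : Fin n => μ.withDensity fun z => ENNReal.ofReal (p i₀ z))
          {s | C₁ * √(Real.log n / n) < densityTV μ (p (est s)) (p i₀)} ≤
        ENNReal.ofReal (C₃ * (n : ℝ) ^ (-r)) := by
  obtain ⟨C, A, hcells⟩ := hentropy
  refine ⟨√(2 * (A + r)), (C + 1) * Real.exp (∫ z, Real.exp (w z / 2) * e z ∂μ), by positivity,
    by positivity, fun i₀ n hn est hest => ?_⟩
  obtain ⟨κ, _, cell, hcard, hcell⟩ := hcells n hn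
  have hle (i : ι) (z : Z) :
      Real.exp (w z / 2) * (√(p i z) * √(p i₀ z)) ≤ Real.exp (w z / 2) * e z := by
    gcongr
    exact sqrt_mul_sqrt_le_of_le (hpos i z).le (he i z) (he i₀ z)
  have hint' (i : ι) : Integrable (fun z => Real.exp (w z / 2) * (√(p i z) * √(p i₀ z))) μ := by
    have := (hp i).measurable
    have := (hp i₀).measurable
    refine hint.mono' (Measurable.aestronglyMeasurable (by fun_prop)) (ae_of_all _ fun z => ?_)
    rw [Real.norm_of_nonneg (by positivity)]
    exact hle i z
  exact (measure_pi_lt_densityTV_le hp hpos hw hint'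
    (fun i => integral_mono (hint' i) hint (hle i)) hn hcell hest (by positivity)).trans
    (ENNReal.ofReal_le_ofReal (natCast_mul_pow_mul_exp_le hcard hn hr.le _))

end MaximumLikelihood

section GaussianIntegrals

theorem integrable_exp_neg_mul_sq_norm {E : Type*} [NormedAddCommGroup E] [NormedSpace ℝ E]
    [Nontrivial E] [FiniteDimensional ℝ E] [MeasurableSpace E] [BorelSpace E] (μ : Measure E)
    [μ.IsAddHaarMeasure] {c : ℝ} (hc : 0 < c) :
    Integrable (fun z => Real.exp (-c * ‖z‖ ^ 2)) μ := by
  rw [integrable_fun_norm_addHaar μ (f := fun t => Real.exp (-c * t ^ 2))]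
  have hdim : (-1 : ℝ) < (Module.finrank ℝ E - 1 : ℕ) :=
    neg_one_lt_zero.trans_le (Nat.cast_nonneg _)
  simpa using (integrable_rpow_mul_exp_neg_mul_sq hc hdim).integrableOn

variable {ι : Type*} [Fintype ι]

theorem lintegral_comp_mulVec [DecidableEq ι] {B : Matrix ι ι ℝ} (hB : B.det ≠ 0)
    {f : (ι → ℝ) → ENNReal} (hf : Measurable f) :
    ∫⁻ x, f (B *ᵥ x) = ENNReal.ofReal |B.det⁻¹| * ∫⁻ x, f x := by
  rw [← smul_eq_mul, ← lintegral_smul_measure, ← Real.map_matrix_volume_pi_eq_smul_volume_pi hB,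
    lintegral_map hf (LinearMap.continuous_on_pi _).measurable]
  rfl

theorem lintegral_exp_neg_dotProduct_self :
    ∫⁻ x : ι → ℝ, ENNReal.ofReal (Real.exp (-(1 / 2) * (x ⬝ᵥ x))) =
      ENNReal.ofReal (√(2 * Real.pi) ^ Fintype.card ι) := by
  have exp_eq_prod (x : ι → ℝ) :
      Real.exp (-(1 / 2) * (x ⬝ᵥ x)) = ∏ i, Real.exp (-(1 / 2) * x i ^ 2) := by
    simp only [dotProduct, Finset.mul_sum, Real.exp_sum, sq]
  have hint : Integrable fun x : ι → ℝ => ∏ i, Real.exp (-(1 / 2) * x i ^ 2) :=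
    Integrable.fintype_prod fun _ => integrable_exp_neg_mul_sq (by norm_num)
  simp only [exp_eq_prod]
  rw [← ofReal_integral_eq_lintegral_ofReal hint
      (ae_of_all _ fun x => Finset.prod_nonneg fun i _ => (Real.exp_pos _).le),
    integral_fintype_prod_volume_eq_pow fun t : ℝ => Real.exp (-(1 / 2) * t ^ 2), integral_gaussian]
  congr 4
  ring

theorem lintegral_exp_neg_quadraticForm [DecidableEq ι] {P : Matrix ι ι ℝ} (hP : P.PosDef) :
    ∫⁻ x, ENNReal.ofReal (Real.exp (-(1 / 2) * (x ⬝ᵥ (P *ᵥ x)))) =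
      ENNReal.ofReal (√(2 * Real.pi) ^ Fintype.card ι / √P.det) := by
  obtain ⟨B, rfl⟩ : ∃ B : Matrix ι ι ℝ, P = Bᵀ * B := by
    open scoped MatrixOrder in
    simpa only [star_eq_conjTranspose, conjTranspose_eq_transpose_of_trivial] using
      CStarAlgebra.nonneg_iff_eq_star_mul_self.1 hP.posSemidef.nonneg
  have hdet : (Bᵀ * B).det = B.det ^ 2 := by rw [det_mul, det_transpose, sq]
  have hB : B.det ≠ 0 := fun h => hP.det_pos.ne' (by rw [hdet, h, zero_pow two_ne_zero])
  have hquad (x : ι → ℝ) : x ⬝ᵥ ((Bᵀ * B) *ᵥ x) = (B *ᵥ x) ⬝ᵥ (B *ᵥ x) := by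
    rw [← mulVec_mulVec, dotProduct_mulVec, vecMul_transpose]
  have hmeas : Measurable fun x : ι → ℝ => ENNReal.ofReal (Real.exp (-(1 / 2) * (x ⬝ᵥ x))) := by
    unfold dotProduct
    fun_prop
  simp only [hquad]
  rw [lintegral_comp_mulVec hB hmeas, lintegral_exp_neg_dotProduct_self,
    ← ENNReal.ofReal_mul (abs_nonneg _), hdet, Real.sqrt_sq_eq_abs, abs_inv, inv_mul_eq_div]

variable {d : ℕ} {Γ : Matrix (Fin d) (Fin d) ℝ}

theorem lintegral_gaussd (hΓ : Γ.PosDef) (c : Fin d → ℝ) :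
    ∫⁻ x, ENNReal.ofReal (gaussd d x c Γ) = 1 := by
  have hdet := hΓ.det_pos
  have normalizer_eq :
      (2 * Real.pi) ^ (-(d : ℝ) / 2) * Γ.det ^ (-(1 : ℝ) / 2) =
        (√(2 * Real.pi) ^ d / √Γ⁻¹.det)⁻¹ := by
    rw [det_nonsing_inv, Ring.inverse_eq_inv', Real.sqrt_inv, div_inv_eq_mul, mul_inv,
      neg_div, neg_div, Real.rpow_neg (by positivity), Real.rpow_neg hdet.le, ← Real.sqrt_eq_rpow,
      Real.rpow_div_two_eq_sqrt _ (by positivity), Real.rpow_natCast]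
  have hpos : 0 < √(2 * Real.pi) ^ d / √Γ⁻¹.det :=
    div_pos (by positivity) (Real.sqrt_pos.2 hΓ.inv.det_pos)
  simp only [gaussd, normalizer_eq, ENNReal.ofReal_mul (inv_nonneg.2 hpos.le)]
  rw [lintegral_const_mul' _ _ ENNReal.ofReal_ne_top,
    lintegral_sub_right_eq_self fun x =>
      ENNReal.ofReal (Real.exp (-(1 / 2) * (x ⬝ᵥ (Γ⁻¹ *ᵥ x)))),
    lintegral_exp_neg_quadraticForm hΓ.inv, Fintype.card_fin,
    ← ENNReal.ofReal_mul (inv_nonneg.2 hpos.le), inv_mul_cancel₀ hpos.ne', ENNReal.ofReal_one]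

theorem gauss1_eq_gaussianPDFReal (y b : ℝ) {ν : NNReal} :
    gauss1 y b ν = ProbabilityTheory.gaussianPDFReal b ν y := by
  rw [gauss1, ProbabilityTheory.gaussianPDFReal, neg_div, Real.rpow_neg (by positivity),
    ← Real.sqrt_eq_rpow]

theorem lintegral_gauss1 (b : ℝ) {ν : ℝ} (hν : 0 < ν) :
    ∫⁻ y, ENNReal.ofReal (gauss1 y b ν) = 1 := by
  lift ν to NNReal using hν.le
  simp only [gauss1_eq_gaussianPDFReal]
  exact ProbabilityTheory.lintegral_gaussianPDFReal_eq_one b (by exact_mod_cast hν.ne')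

end GaussianIntegrals

section GaussianExperts

theorem exists_abs_le_of_continuous {K : Type*} [TopologicalSpace K] [CompactSpace K] {f : K → ℝ}
    (hf : Continuous f) : ∃ R, ∀ k, |f k| ≤ R := by
  obtain ⟨R, hR⟩ := isCompact_univ.exists_bound_of_continuousOn hf.continuousOn
  exact ⟨R, fun k => hR k (Set.mem_univ k)⟩

theorem exists_pos_mul_sq_norm_le {K E : Type*} [TopologicalSpace K] [CompactSpace K]
    [NormedAddCommGroup E] [NormedSpace ℝ E] [ProperSpace E] {Q : K → E → ℝ}
    (hQ : Continuous fun q : K × E => Q q.1 q.2) (hpos : ∀ k u, u ≠ 0 → 0 < Q k u)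
    (hsmul : ∀ k (t : ℝ) u, Q k (t • u) = t ^ 2 * Q k u) :
    ∃ c, 0 < c ∧ ∀ k u, c * ‖u‖ ^ 2 ≤ Q k u := by
  obtain ⟨c, hc, hcQ⟩ := (isCompact_univ.prod (isCompact_sphere (0 : E) 1)).exists_forall_le'
    hQ.continuousOn fun q hq => hpos q.1 q.2 (ne_zero_of_mem_unit_sphere ⟨q.2, hq.2⟩)
  refine ⟨c, hc, fun k u => ?_⟩
  rcases eq_or_ne u 0 with rfl | hu
  · have := hsmul k 0 0
    simp_all
  · have hu' : ‖u‖ ≠ 0 := norm_ne_zero_iff.2 hu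
    have hunit : ‖u‖⁻¹ • u ∈ Metric.sphere (0 : E) 1 := by
      simp [norm_smul, hu']
    calc c * ‖u‖ ^ 2 ≤ Q k (‖u‖⁻¹ • u) * ‖u‖ ^ 2 := by
          gcongr
          exact hcQ (k, ‖u‖⁻¹ • u) ⟨Set.mem_univ k, hunit⟩
      _ = Q k u := by rw [hsmul]; field_simp

namespace Param

variable {d : ℕ}

/-- The nondegenerate parameters, whose components `Fcomp θ` are Gaussian densities. -/
def IsNondegenerate (θ : Param d) : Prop :=
  θ.2.1.PosDef ∧ 0 < θ.2.2.2.2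

/-- The normalizing constant of the Gaussian density `Fcomp θ` on `ℝ^d × ℝ`. -/
noncomputable def normalizer (θ : Param d) : ℝ :=
  (2 * Real.pi) ^ (-(d : ℝ) / 2) * θ.2.1.det ^ (-(1 : ℝ) / 2) *
    (2 * Real.pi * θ.2.2.2.2) ^ (-(1 : ℝ) / 2)

/-- The mean of the Gaussian density `Fcomp θ` on `ℝ^d × ℝ`. -/
def center (θ : Param d) : (Fin d → ℝ) × ℝ :=
  (θ.1, θ.2.2.1 ⬝ᵥ θ.1 + θ.2.2.2.1)

/-- The quadratic form in the exponent of the Gaussian density `Fcomp θ` on `ℝ^d × ℝ`. -/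
noncomputable def quadForm (θ : Param d) (u : (Fin d → ℝ) × ℝ) : ℝ :=
  (u.1 ⬝ᵥ (θ.2.1⁻¹ *ᵥ u.1)) / 2 + (u.2 - θ.2.2.1 ⬝ᵥ u.1) ^ 2 / (2 * θ.2.2.2.2)

theorem Fcomp_eq_normalizer_mul_exp (θ : Param d) (z : (Fin d → ℝ) × ℝ) :
    Fcomp θ z.1 z.2 = θ.normalizer * Real.exp (-θ.quadForm (z - θ.center)) := by
  have exponent_eq : -θ.quadForm (z - θ.center) =
      -(1 / 2) * ((z.1 - θ.1) ⬝ᵥ (θ.2.1⁻¹ *ᵥ (z.1 - θ.1))) +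
        -((z.2 - (θ.2.2.1 ⬝ᵥ z.1 + θ.2.2.2.1)) ^ 2) / (2 * θ.2.2.2.2) := by
    simp only [quadForm, center, Prod.fst_sub, Prod.snd_sub, dotProduct_sub]
    ring
  rw [exponent_eq, Real.exp_add, Fcomp, gaussd, gauss1, normalizer]
  ring

theorem quadForm_smul (θ : Param d) (t : ℝ) (u : (Fin d → ℝ) × ℝ) :
    θ.quadForm (t • u) = t ^ 2 * θ.quadForm u := by
  simp only [quadForm, Prod.smul_fst, Prod.smul_snd, mulVec_smul, dotProduct_smul, smul_dotProduct,
    smul_eq_mul]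
  ring

namespace IsNondegenerate

variable {θ : Param d}

theorem normalizer_pos (hθ : θ.IsNondegenerate) : 0 < θ.normalizer := by
  have := hθ.1.det_pos
  have := hθ.2
  unfold normalizer
  positivity

theorem quadForm_pos (hθ : θ.IsNondegenerate) {u : (Fin d → ℝ) × ℝ} (hu : u ≠ 0) :
    0 < θ.quadForm u := by
  have hν := hθ.2
  rcases eq_or_ne u.1 0 with hu₁ | hu₁
  · have hu₂ : u.2 ≠ 0 := fun hu₂ => hu (Prod.ext hu₁ hu₂)
    simp only [quadForm, hu₁, zero_dotProduct, dotProduct_zero]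
    positivity
  · have hquad : 0 < u.1 ⬝ᵥ (θ.2.1⁻¹ *ᵥ u.1) := by
      simpa using hθ.1.inv.dotProduct_mulVec_pos hu₁
    unfold quadForm
    positivity

theorem Fcomp_pos (hθ : θ.IsNondegenerate) (z : (Fin d → ℝ) × ℝ) : 0 < Fcomp θ z.1 z.2 := by
  rw [Fcomp_eq_normalizer_mul_exp]
  exact mul_pos hθ.normalizer_pos (Real.exp_pos _)

theorem log_Fcomp (hθ : θ.IsNondegenerate) (z : (Fin d → ℝ) × ℝ) :
    Real.log (Fcomp θ z.1 z.2) = Real.log θ.normalizer - θ.quadForm (z - θ.center) := by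
  rw [Fcomp_eq_normalizer_mul_exp, Real.log_mul hθ.normalizer_pos.ne' (Real.exp_pos _).ne',
    Real.log_exp, ← sub_eq_add_neg]

end IsNondegenerate

section ContinuousFamily

variable {K : Type*} [TopologicalSpace K] {θ : K → Param d}

theorem continuous_center (hθ : Continuous θ) : Continuous fun k => (θ k).center := by
  unfold center dotProduct
  fun_prop

theorem continuous_inv_apply (hθ : Continuous θ) (hdet : ∀ k, (θ k).2.1.det ≠ 0) (i j : Fin d) :
    Continuous fun k => (θ k).2.1⁻¹ i j := by
  have hΓ : Continuous fun k => (θ k).2.1 := by fun_prop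
  simp only [inv_def, Ring.inverse_eq_inv', Matrix.smul_apply, smul_eq_mul]
  exact (hΓ.matrix_det.inv₀ hdet).mul (hΓ.matrix_adjugate.matrix_elem i j)

theorem continuous_normalizer (hθ : Continuous θ) (hnd : ∀ k, (θ k).IsNondegenerate) :
    Continuous fun k => (θ k).normalizer := by
  have hdet : Continuous fun k => (θ k).2.1.det := Continuous.matrix_det (by fun_prop)
  have hν (k : K) : 2 * Real.pi * (θ k).2.2.2.2 ≠ 0 := (mul_pos Real.two_pi_pos (hnd k).2).ne'
  exact (continuous_const.mul (hdet.rpow_const fun k => .inl (hnd k).1.det_pos.ne')).mul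
    (Continuous.rpow_const (by fun_prop) fun k => .inl (hν k))

theorem continuous_quadForm (hθ : Continuous θ) (hnd : ∀ k, (θ k).IsNondegenerate)
    {u : K → (Fin d → ℝ) × ℝ} (hu : Continuous u) :
    Continuous fun k => (θ k).quadForm (u k) := by
  have hinv := continuous_inv_apply hθ fun k => (hnd k).1.det_pos.ne'
  have hν (k : K) : 2 * (θ k).2.2.2.2 ≠ 0 := (mul_pos two_pos (hnd k).2).ne'
  have hquad : Continuous fun k => (u k).1 ⬝ᵥ ((θ k).2.1⁻¹ *ᵥ (u k).1) :=
    hu.fst.dotProduct ((continuous_matrix hinv).matrix_mulVec hu.fst)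
  have hslope : Continuous fun k => (θ k).2.2.1 ⬝ᵥ (u k).1 :=
    hθ.snd.snd.fst.dotProduct hu.fst
  exact (hquad.div_const 2).add
    (((hu.snd.sub hslope).pow 2).div (continuous_const.mul hθ.snd.snd.snd.snd) hν)

variable [CompactSpace K]

theorem exists_Fcomp_le_mul_exp (hθ : Continuous θ) (hnd : ∀ k, (θ k).IsNondegenerate) :
    ∃ C c : ℝ, 0 < c ∧ ∀ k (z : (Fin d → ℝ) × ℝ),
      Fcomp (θ k) z.1 z.2 ≤ C * Real.exp (-c * ‖z‖ ^ 2) := by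
  obtain ⟨c, hc, hcQ⟩ := exists_pos_mul_sq_norm_le
    (continuous_quadForm (hθ.comp continuous_fst) (fun q => hnd q.1) continuous_snd)
    (fun k u => (hnd k).quadForm_pos) fun k t u => (θ k).quadForm_smul t u
  obtain ⟨N, hN⟩ := exists_abs_le_of_continuous (continuous_normalizer hθ hnd)
  obtain ⟨B, hB⟩ := exists_abs_le_of_continuous (continuous_center hθ).norm
  refine ⟨N * Real.exp (c * B ^ 2), c / 2, half_pos hc, fun k z => ?_⟩
  have sq_norm_le : ‖z‖ ^ 2 / 2 - B ^ 2 ≤ ‖z - (θ k).center‖ ^ 2 := by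
    have hle : ‖z‖ ≤ ‖z - (θ k).center‖ + B := by
      linarith [norm_le_norm_sub_add z (θ k).center, (le_abs_self _).trans (hB k)]
    nlinarith [pow_le_pow_left₀ (norm_nonneg z) hle 2, sq_nonneg (‖z - (θ k).center‖ - B)]
  calc Fcomp (θ k) z.1 z.2 = (θ k).normalizer * Real.exp (-(θ k).quadForm (z - (θ k).center)) :=
        Fcomp_eq_normalizer_mul_exp _ _
    _ ≤ N * Real.exp (c * B ^ 2 + -(c / 2) * ‖z‖ ^ 2) := by
        gcongr
        · exact (abs_nonneg _).trans (hN k)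
        · exact (le_abs_self _).trans (hN k)
        · nlinarith [hcQ k (z - (θ k).center)]
    _ = N * Real.exp (c * B ^ 2) * Real.exp (-(c / 2) * ‖z‖ ^ 2) := by
        rw [Real.exp_add, mul_assoc]

theorem hasExpFamilyForm_quadForm (hθ : Continuous θ) (hnd : ∀ k, (θ k).IsNondegenerate)
    {Z : Type*} {u : K → Z → (Fin d → ℝ) × ℝ} {τ : Z → ℝ}
    (hu₁ : ∀ i, HasExpFamilyForm (fun k z => (u k z).1 i) τ)
    (hu₂ : HasExpFamilyForm (fun k z => (u k z).2) τ) :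
    HasExpFamilyForm (fun k z => (θ k).quadForm (u k z)) fun z => τ z * τ z := by
  have hinv (i j : Fin d) : ∃ R, ∀ k, |(θ k).2.1⁻¹ i j| ≤ R :=
    exists_abs_le_of_continuous (continuous_inv_apply hθ (fun k => (hnd k).1.det_pos.ne') i j)
  have hslope (i : Fin d) : ∃ R, ∀ k, |(θ k).2.2.1 i| ≤ R :=
    exists_abs_le_of_continuous (by fun_prop)
  have hprecision : ∃ R, ∀ k, |(2 * (θ k).2.2.2.2)⁻¹| ≤ R :=
    exists_abs_le_of_continuous
      (Continuous.inv₀ (by fun_prop) fun k => (mul_pos two_pos (hnd k).2).ne')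
  have hquad := HasExpFamilyForm.sum Finset.univ fun i _ => (hu₁ i).mul
    (HasExpFamilyForm.sum Finset.univ fun j _ => (hu₁ j).const_mul (hinv i j))
  have hresidual := hu₂.sub
    (HasExpFamilyForm.sum Finset.univ fun i _ => (hu₁ i).const_mul (hslope i))
  convert (hquad.const_mul (c := fun _ => 1 / 2) ⟨_, fun _ => le_rfl⟩).add
    ((hresidual.mul hresidual).const_mul hprecision) using 3
  simp only [quadForm, mulVec, dotProduct]
  ring

theorem hasExpFamilyForm_log_Fcomp (hθ : Continuous θ) (hnd : ∀ k, (θ k).IsNondegenerate) :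
    HasExpFamilyForm (fun k (z : (Fin d → ℝ) × ℝ) => Real.log (Fcomp (θ k) z.1 z.2))
      fun z => (1 + ‖z‖) * (1 + ‖z‖) := by
  have one_le (z : (Fin d → ℝ) × ℝ) : 1 ≤ 1 + ‖z‖ := le_add_of_nonneg_right (norm_nonneg z)
  have hcenter₁ (i : Fin d) : ∃ R, ∀ k, |(θ k).center.1 i| ≤ R :=
    exists_abs_le_of_continuous
      ((continuous_apply i).comp (continuous_fst.comp (continuous_center hθ)))
  have hcenter₂ : ∃ R, ∀ k, |(θ k).center.2| ≤ R :=
    exists_abs_le_of_continuous (continuous_snd.comp (continuous_center hθ))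
  have hnormalizer : ∃ R, ∀ k, |Real.log (θ k).normalizer| ≤ R :=
    exists_abs_le_of_continuous
      ((continuous_normalizer hθ hnd).log fun k => (hnd k).normalizer_pos.ne')
  have hcoord (i : Fin d) (z : (Fin d → ℝ) × ℝ) : |z.1 i| ≤ 1 + ‖z‖ :=
    ((norm_le_pi_norm z.1 i).trans (norm_fst_le z)).trans (le_add_of_nonneg_left zero_le_one)
  have hlast (z : (Fin d → ℝ) × ℝ) : |z.2| ≤ 1 + ‖z‖ :=
    (norm_snd_le z).trans (le_add_of_nonneg_left zero_le_one)
  simp only [(hnd _).log_Fcomp]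
  exact (HasExpFamilyForm.of_parameter hnormalizer fun z =>
    one_le_mul_of_one_le_of_one_le (one_le z) (one_le z)).sub (hasExpFamilyForm_quadForm hθ hnd
      (fun i => (HasExpFamilyForm.of_statistic (hcoord i)).sub (.of_parameter (hcenter₁ i) one_le))
      ((HasExpFamilyForm.of_statistic hlast).sub (.of_parameter hcenter₂ one_le)))

end ContinuousFamily

theorem IsNondegenerate.isProbDensity {θ : Param d} (hθ : θ.IsNondegenerate) :
    IsProbDensity volume fun z : (Fin d → ℝ) × ℝ => Fcomp θ z.1 z.2 := by
  have hcont : Continuous fun z : (Fin d → ℝ) × ℝ => Fcomp θ z.1 z.2 := by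
    simp only [Fcomp_eq_normalizer_mul_exp]
    have := continuous_quadForm (continuous_const (y := θ)) (fun _ => hθ)
      (continuous_id.sub (continuous_const (y := θ.center)))
    fun_prop
  refine .of_lintegral_eq_one hcont.measurable (fun z => (hθ.Fcomp_pos z).le) ?_
  have gaussd_nonneg (x : Fin d → ℝ) : 0 ≤ gaussd d x θ.1 θ.2.1 := by
    have := hθ.1.det_pos
    unfold gaussd
    positivity
  rw [Measure.volume_eq_prod, lintegral_prod _ hcont.measurable.ennreal_ofReal.aemeasurable]
  simp only [Fcomp, ENNReal.ofReal_mul (gaussd_nonneg _),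
    lintegral_const_mul' _ _ ENNReal.ofReal_ne_top, lintegral_gauss1 _ hθ.2, mul_one,
    lintegral_gaussd hθ.1]

end Param

end GaussianExperts

section Mixtures

namespace Mix

variable {d k : ℕ} {β : ℝ} {Θ : Set (Param d)} {G : Mix d}

theorem mem.w_nonneg (hG : G.mem k β Θ) (hβ : 0 ≤ β) (i : Fin G.m) : 0 ≤ G.w i :=
  hβ.trans (hG.2.2.2.2.1 i)

theorem mem.w_le_one (hG : G.mem k β Θ) (hβ : 0 ≤ β) (i : Fin G.m) : G.w i ≤ 1 :=
  hG.2.2.2.2.2 ▸ Finset.single_le_sum (fun j _ => hG.w_nonneg hβ j) (Finset.mem_univ i)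

theorem mem.mono {k' : ℕ} (hG : G.mem k' β Θ) (hk : k' ≤ k) : G.mem k β Θ :=
  ⟨hG.1, hG.2.1.trans hk, hG.2.2⟩

theorem mem.pdf_pos (hG : G.mem k β Θ) (hβ : 0 < β) (hΘ : ∀ θ ∈ Θ, θ.IsNondegenerate)
    (z : (Fin d → ℝ) × ℝ) : 0 < G.pdf z :=
  Finset.sum_pos
    (fun i _ => mul_pos (hβ.trans_le (hG.2.2.2.2.1 i)) ((hΘ _ (hG.2.2.1 i)).Fcomp_pos z))
    ⟨⟨0, hG.1⟩, Finset.mem_univ _⟩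

theorem mem.isProbDensity_pdf (hG : G.mem k β Θ) (hβ : 0 ≤ β)
    (hΘ : ∀ θ ∈ Θ, θ.IsNondegenerate) : IsProbDensity volume G.pdf :=
  .sum_mul (fun i => (hΘ _ (hG.2.2.1 i)).isProbDensity) (hG.w_nonneg hβ) hG.2.2.2.2.2

theorem mem.pdf_le (hG : G.mem k β Θ) (hβ : 0 ≤ β) {z : (Fin d → ℝ) × ℝ} {e : ℝ}
    (he : ∀ θ ∈ Θ, Fcomp θ z.1 z.2 ≤ e) : G.pdf z ≤ e :=
  calc G.pdf z ≤ ∑ i, G.w i * e := Finset.sum_le_sum fun i _ =>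
        mul_le_mul_of_nonneg_left (he _ (hG.2.2.1 i)) (hG.w_nonneg hβ i)
    _ = e := by rw [← Finset.sum_mul, hG.2.2.2.2.2, one_mul]

theorem mem.pdf_eq_sum_exp (hG : G.mem k β Θ) (hβ : 0 < β) (hΘ : ∀ θ ∈ Θ, θ.IsNondegenerate)
    (z : (Fin d → ℝ) × ℝ) :
    G.pdf z = ∑ i, Real.exp (Real.log (G.w i) + Real.log (Fcomp (G.θ i) z.1 z.2)) :=
  Finset.sum_congr rfl fun i _ => by
    rw [Real.exp_add, Real.exp_log (hβ.trans_le (hG.2.2.2.2.1 i)),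
      Real.exp_log ((hΘ _ (hG.2.2.1 i)).Fcomp_pos z)]

theorem hasPolynomialEntropy_log_pdf (k : ℕ) (hβ : 0 < β) (hΘc : IsCompact Θ)
    (hΘ : ∀ θ ∈ Θ, θ.IsNondegenerate) {c : ℝ} (hc : 0 < c) :
    HasPolynomialEntropy (fun (G : {G : Mix d // G.mem k β Θ}) z => Real.log (G.1.pdf z))
      fun z => c * (1 + ‖z‖ ^ 2) := by
  have : CompactSpace Θ := isCompact_iff_compactSpace.1 hΘc
  have hlogw : ∃ R, ∀ q : Set.Icc β 1 × Θ, |Real.log q.1| ≤ R :=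
    exists_abs_le_of_continuous
      (Continuous.log (by fun_prop) fun q => (hβ.trans_le q.1.2.1).ne')
  have hcomponent := (HasExpFamilyForm.of_parameter hlogw fun z : (Fin d → ℝ) × ℝ =>
      one_le_mul_of_one_le_of_one_le (le_add_of_nonneg_right (norm_nonneg z))
        (le_add_of_nonneg_right (norm_nonneg z))).add
    (Param.hasExpFamilyForm_log_Fcomp (θ := fun q : Set.Icc β 1 × Θ => (q.2 : Param d))
      (by fun_prop) fun q => hΘ _ q.2.2)
  have weight_le (z : (Fin d → ℝ) × ℝ) :
      (1 + ‖z‖) * (1 + ‖z‖) ≤ 2 / c * (c * (1 + ‖z‖ ^ 2)) := by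
    rw [← mul_assoc, div_mul_cancel₀ _ hc.ne']
    nlinarith [sq_nonneg (1 - ‖z‖)]
  have hentropy := (hcomponent.mono (by positivity) weight_le).hasPolynomialEntropy
    fun z => by positivity
  convert (hentropy.log_sum_exp (fun z => by positivity) k).comp
    fun G : {G : Mix d // G.mem k β Θ} => ⟨⟨G.1.m, Nat.lt_succ_of_le G.2.2.1⟩, fun i =>
      (⟨G.1.w i, G.2.2.2.2.2.1 i, G.2.w_le_one hβ.le i⟩, ⟨G.1.θ i, G.2.2.2.1 i⟩)⟩ using 4 with G z
  exact G.2.pdf_eq_sum_exp hβ hΘ z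

end Mix

end Mixtures

theorem mle_density_estimation_rate_general (d k : ℕ) {Θ : Set (Param d)} (hΘc : IsCompact Θ)
    (hΘ : ∀ θ ∈ Θ, θ.IsNondegenerate) {β : ℝ} (hβ : 0 < β) {C₂ : ℝ} (hC₂ : 0 < C₂) :
    ∃ C₁ C₃ : ℝ, 0 < C₁ ∧ 0 < C₃ ∧
      ∀ G0 : Mix d, G0.mem k β Θ → ∀ n : ℕ, 1 ≤ n →
      ∀ Ghat : (Fin n → (Fin d → ℝ) × ℝ) → Mix d,
        (∀ s, (Ghat s).mem k β Θ) →
        (∀ s, ∑ i, Real.log (G0.pdf (s i)) ≤ ∑ i, Real.log ((Ghat s).pdf (s i))) →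
        (Measure.pi fun _ : Fin n =>
            (volume : Measure ((Fin d → ℝ) × ℝ)).withDensity
              (fun z => ENNReal.ofReal (G0.pdf z)))
          {s | C₁ * Real.sqrt (Real.log n / n) < TV ((Ghat s).pdf) (G0.pdf)}
          ≤ ENNReal.ofReal (C₃ * (n : ℝ) ^ (-C₂)) := by
  have : CompactSpace Θ := isCompact_iff_compactSpace.1 hΘc
  obtain ⟨C, c, hc, hle⟩ := Param.exists_Fcomp_le_mul_exp (θ := ((↑) : Θ → Param d))
    continuous_subtype_val fun θ => hΘ _ θ.2
  have hint : Integrable fun z : (Fin d → ℝ) × ℝ =>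
      Real.exp (c * (1 + ‖z‖ ^ 2) / 2) * (C * Real.exp (-c * ‖z‖ ^ 2)) := by
    have hgauss : Integrable fun z : (Fin d → ℝ) × ℝ => Real.exp (-(c / 2) * ‖z‖ ^ 2) :=
      integrable_exp_neg_mul_sq_norm (volume.prod volume) (half_pos hc)
    convert hgauss.const_mul (Real.exp (c / 2) * C) using 2 with z
    rw [mul_left_comm, ← Real.exp_add, mul_right_comm, ← Real.exp_add, mul_comm C]
    ring_nf
  obtain ⟨C₁, C₃, hC₁, hC₃, hrate⟩ := exists_densityTV_rate_of_hasPolynomialEntropy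
    (fun G : {G : Mix d // G.mem k β Θ} => G.2.isProbDensity_pdf hβ.le hΘ)
    (fun G => G.2.pdf_pos hβ hΘ) (by fun_prop)
    (fun G z => G.2.pdf_le hβ.le fun θ hθ => hle ⟨θ, hθ⟩ z) hint
    (Mix.hasPolynomialEntropy_log_pdf k hβ hΘc hΘ hc) hC₂
  exact ⟨C₁, C₃, hC₁, hC₃, fun G0 hG0 n hn Ghat hGhat hlik =>
    hrate ⟨G0, hG0⟩ n hn (fun s => ⟨Ghat s, hGhat s⟩) hlik⟩

/-- **Joint density estimation rate for the MLE.** Under the true density `p_{G0}`,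
any maximum likelihood estimator over `O_{k,β}(Θ)` converges to `p_{G0}` in total
variation at the parametric rate `√(log n / n)`, up to universal constants:
the outer probability that `V(p_{Ĝ_n}, p_{G0}) > C₁ √(log n / n)` is at most
`C₃ n^{−C₂}`. -/
theorem mle_density_estimation_rate (d k0 k : ℕ) (hd : 0 < d) (hk0 : 0 < k0)
    (hk : k0 ≤ k) (Θ : Set (Param d)) (hΘc : IsCompact Θ)
    (hΘ : ∀ θ ∈ Θ, (θ.2.1).IsSymm ∧ (θ.2.1).PosDef ∧ 0 < θ.2.2.2.2)
    (β : ℝ) (hβ : 0 < β) (hβk : β ≤ 1 / (k : ℝ))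
    (G0 : Mix d) (hG0 : G0.mem k0 β Θ) :
    ∃ C₁ C₂ C₃ : ℝ, 0 < C₁ ∧ 0 < C₂ ∧ 0 < C₃ ∧
      ∀ n : ℕ, 2 ≤ n →
      ∀ Ghat : (Fin n → (Fin d → ℝ) × ℝ) → Mix d,
        (∀ s, (Ghat s).mem k β Θ) →
        (∀ s, ∀ G : Mix d, G.mem k β Θ →
          ∑ i, Real.log (G.pdf (s i)) ≤ ∑ i, Real.log ((Ghat s).pdf (s i))) →
        (Measure.pi fun _ : Fin n =>
            (volume : Measure ((Fin d → ℝ) × ℝ)).withDensity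
              (fun z => ENNReal.ofReal (G0.pdf z)))
          {s | C₁ * Real.sqrt (Real.log n / n) < TV ((Ghat s).pdf) (G0.pdf)}
          ≤ ENNReal.ofReal (C₃ * (n : ℝ) ^ (-C₂)) := by
  obtain ⟨C₁, C₃, hC₁, hC₃, hrate⟩ :=
    mle_density_estimation_rate_general d k hΘc (fun θ hθ => (hΘ θ hθ).2) hβ one_pos
  exact ⟨C₁, 1, C₃, hC₁, one_pos, hC₃, fun n hn Ghat hGhat hmax =>
    hrate G0 (hG0.mono hk) n (one_le_two.trans hn) Ghat hGhat fun s => hmax s G0 (hG0.mono hk)⟩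
end

section
/- r̄(3) = 6; that is, the bar-system of order (3, 6) admits no non-trivial solution, while the bar-system of order (3, 5) does admit a non-trivial solution. -/
/-- The `s`-th equation of the bar-system:
`Σ_{l=1}^m Σ_{n₁+2n₂=s} p_l² q_{1,l}^{n₁} q_{2,l}^{n₂} / (n₁!·n₂!)`. -/
noncomputable def barEq (m : ℕ) (p q1 q2 : Fin m → ℝ) (s : ℕ) : ℝ :=
  ∑ l : Fin m,
    ∑ nn ∈ (Finset.range (s + 1) ×ˢ Finset.range (s + 1)).filter
        (fun nn => nn.1 + 2 * nn.2 = s),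
      p l ^ 2 * q1 l ^ nn.1 * q2 l ^ nn.2 /
        ((nn.1.factorial : ℝ) * (nn.2.factorial : ℝ))

/-- The bar-system of order `(m, r)` admits a non-trivial solution: there are reals
`p_l, q_{1,l}, q_{2,l}` with all `p_l ≠ 0` and some `q_{1,l} ≠ 0` satisfying the
equations for every `s = 1, …, r`. -/
def barSol (m r : ℕ) : Prop :=
  ∃ p q1 q2 : Fin m → ℝ,
    (∀ l, p l ≠ 0) ∧ (∃ l, q1 l ≠ 0) ∧
    ∀ s : ℕ, 1 ≤ s → s ≤ r → barEq m p q1 q2 s = 0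

/-- `r̄(m)`: the smallest positive integer `r` such that the bar-system of order
`(m, r)` admits no non-trivial solution. -/
noncomputable def rbar (m : ℕ) : ℕ := sInf {r : ℕ | 1 ≤ r ∧ ¬ barSol m r}

/-!
The bar-system says that the mixture of the normal laws of mean `q₁` and variance `2 q₂`, with
weights `p²`, has the moments of a point mass at `0`; the variances may be negative. If the middle
variance is not positive, translate by the middle mean and subtract the middle variance from all
variances, which exchanges the roles of the middle law and the point mass. In both cases a point
mass at `0`, a law of variance `u ≤ 0` and two laws of variances `v, w ≥ 0` satisfy a linear
relation on polynomials of degree at most `6`, which is tested on `T X² S²`. The factor `X²` kills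
the point mass. Unless `v = w = 0`, a real-rooted quadratic `T` following the sign of the weighted
sum of the two wide densities makes these two laws contribute a definite quadratic form in `S`. For
`u ≤ 0` the heat flow `exp (u/2 · d²/dx²)` preserves real-rootedness, so Laguerre's inequality
yields a linear `S` on which the contribution of the narrow law vanishes.
-/

open Polynomial MeasureTheory ProbabilityTheory
open scoped NNReal ComplexConjugate

section HeatFlow

variable {R : Type*} [CommSemiring R]

/-- The polynomial heat flow `exp (v/2 · d²/dx²)`, for a "time" `v` of either sign. Encoded through
the operator `X + v d/dx`, the conjugate of multiplication by `X`, so that it makes sense without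
division. For `0 ≤ v`, the value at `x` of `heatFlow v P` is the expectation of `P` under the
normal law of mean `x` and variance `v`. -/
noncomputable def heatFlow (v : R) : R[X] →ₗ[R] R[X] :=
  LinearMap.applyₗ 1 ∘ₗ (aeval (LinearMap.mulLeft R X + v • derivative)).toLinearMap

lemma heatFlow_C (v a : R) : heatFlow v (C a) = C a := by
  simp [heatFlow, Module.algebraMap_end_apply, smul_eq_C_mul]

lemma heatFlow_X_mul (v : R) (P : R[X]) :
    heatFlow v (X * P) = X * heatFlow v P + C v * derivative (heatFlow v P) := by
  simp [heatFlow, smul_eq_C_mul]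

lemma heatFlow_C_mul (v a : R) (P : R[X]) : heatFlow v (C a * P) = C a * heatFlow v P := by
  rw [← smul_eq_C_mul, map_smul, smul_eq_C_mul]

lemma heatFlow_X (v : R) : heatFlow v X = X := by
  rw [← mul_one X, ← C_1, heatFlow_X_mul, heatFlow_C, derivative_C, mul_zero, add_zero]

lemma heatFlow_X_sq (v : R) : heatFlow v (X ^ 2) = X ^ 2 + C v := by
  rw [sq, heatFlow_X_mul, heatFlow_X, derivative_X, mul_one]

lemma polynomial_induction_X_mul {motive : R[X] → Prop} (P : R[X]) (C : ∀ a, motive (C a))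
    (add : ∀ P Q, motive P → motive Q → motive (P + Q)) (X_mul : ∀ P, motive P → motive (X * P)) :
    motive P := by
  induction P using Polynomial.induction_on with
  | C a => exact C a
  | add P Q hP hQ => exact add P Q hP hQ
  | monomial n a h =>
    rw [pow_succ', mul_left_comm]
    exact X_mul _ h

lemma heatFlow_zero (P : R[X]) : heatFlow 0 P = P := by
  induction P using polynomial_induction_X_mul with
  | C a => exact heatFlow_C 0 a
  | add P Q hP hQ => rw [map_add, hP, hQ]
  | X_mul P hP => rw [heatFlow_X_mul, hP, C_0, zero_mul, add_zero]

lemma derivative_heatFlow (v : R) (P : R[X]) :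
    derivative (heatFlow v P) = heatFlow v (derivative P) := by
  induction P using polynomial_induction_X_mul with
  | C a => rw [heatFlow_C, derivative_C, map_zero]
  | add P Q hP hQ => simp only [map_add, hP, hQ]
  | X_mul P hP =>
    simp only [heatFlow_X_mul, derivative_mul, derivative_X, derivative_C, map_add, hP]
    rw [zero_mul, one_mul, one_mul, zero_add, add_assoc]

lemma heatFlow_heatFlow (u v : R) (P : R[X]) :
    heatFlow u (heatFlow v P) = heatFlow (u + v) P := by
  induction P using polynomial_induction_X_mul with
  | C a => simp only [heatFlow_C]
  | add P Q hP hQ => simp only [map_add, hP, hQ]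
  | X_mul P hP =>
    simp only [heatFlow_X_mul, heatFlow_C_mul, map_add, ← derivative_heatFlow, hP]
    ring

lemma heatFlow_comp_X_add_C (v a : R) (P : R[X]) :
    heatFlow v (P.comp (X + C a)) = (heatFlow v P).comp (X + C a) := by
  induction P using polynomial_induction_X_mul with
  | C b => simp only [C_comp, heatFlow_C]
  | add P Q hP hQ => simp only [map_add, add_comp, hP, hQ]
  | X_mul P hP =>
    simp only [mul_comp, X_comp, C_comp, add_comp, add_mul, map_add, heatFlow_X_mul,
      heatFlow_C_mul, hP, derivative_comp, derivative_X, derivative_C]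
    ring

lemma natDegree_heatFlow_X_pow_le (v : R) (n : ℕ) : (heatFlow v (X ^ n)).natDegree ≤ n := by
  induction n with
  | zero => rw [pow_zero, ← C_1, heatFlow_C, natDegree_C]
  | succ n ih =>
    rw [pow_succ', heatFlow_X_mul]
    refine natDegree_add_le_of_degree_le ?_ ?_
    · exact natDegree_mul_le.trans ((add_le_add natDegree_X_le ih).trans (by omega))
    · exact (natDegree_C_mul_le _ _).trans ((natDegree_derivative_le _).trans (by omega))

lemma natDegree_heatFlow_le (v : R) (P : R[X]) : (heatFlow v P).natDegree ≤ P.natDegree := by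
  conv_lhs => rw [P.as_sum_range_C_mul_X_pow, map_sum]
  refine natDegree_sum_le_of_forall_le _ _ fun i hi => ?_
  rw [heatFlow_C_mul]
  exact (natDegree_C_mul_le _ _).trans ((natDegree_heatFlow_X_pow_le v i).trans
    (Nat.lt_succ_iff.1 (Finset.mem_range.1 hi)))

end HeatFlow

section Laguerre

lemma splits_induction {R : Type*} [CommRing R] {motive : (P : R[X]) → P.Splits → Prop}
    (one : motive 1 Splits.one)
    (C_mul : ∀ a P (hP : P.Splits), motive P hP → motive (C a * P) (hP.C_mul a))
    (X_add_C_mul : ∀ a P (hP : P.Splits),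
      motive P hP → motive ((X + C a) * P) ((Splits.X_add_C a).mul hP))
    {P : R[X]} (hP : P.Splits) : motive P hP := by
  refine Submonoid.closure_induction_left one ?_ hP
  rintro _ (⟨a, rfl⟩ | ⟨a, rfl⟩) P hP h
  exacts [C_mul a P hP h, X_add_C_mul a P hP h]

lemma im_aeval_derivative_mul_conj_nonpos {F : ℝ[X]} (hF : F.Splits) {z : ℂ} (hz : 0 ≤ z.im) :
    (aeval z (derivative F) * conj (aeval z F)).im ≤ 0 := by
  induction hF using splits_induction with
  | one => simp
  | C_mul a P _ ih =>
    have h : aeval z (derivative (C a * P)) * conj (aeval z (C a * P)) =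
        ((a ^ 2 : ℝ) : ℂ) * (aeval z (derivative P) * conj (aeval z P)) := by
      simp only [derivative_mul, derivative_C, zero_mul, zero_add, map_mul, aeval_C,
        Complex.coe_algebraMap, Complex.conj_ofReal, Complex.ofReal_pow]
      ring
    rw [h, Complex.im_ofReal_mul]
    exact mul_nonpos_of_nonneg_of_nonpos (sq_nonneg a) ih
  | X_add_C_mul a P _ ih =>
    have h : aeval z (derivative ((X + C a) * P)) * conj (aeval z ((X + C a) * P)) =
        ((Complex.normSq (aeval z P) : ℝ) : ℂ) * conj (z + a) +
          ((Complex.normSq (z + a) : ℝ) : ℂ) * (aeval z (derivative P) * conj (aeval z P)) := by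
      simp only [derivative_mul, derivative_X, derivative_C, add_zero, one_mul, map_add,
        map_mul, aeval_X, aeval_C, Complex.coe_algebraMap, Complex.conj_ofReal,
        Complex.normSq_eq_conj_mul_self]
      ring
    rw [h, Complex.add_im, Complex.im_ofReal_mul, Complex.im_ofReal_mul]
    have h1 := mul_nonneg (Complex.normSq_nonneg (aeval z P)) hz
    have h2 := mul_nonpos_of_nonneg_of_nonpos (Complex.normSq_nonneg (z + a)) ih
    simp only [Complex.conj_im, Complex.add_im, Complex.ofReal_im]
    linarith

lemma splits_of_forall_aeval_ne_zero {F : ℝ[X]} (hF : ∀ z : ℂ, 0 < z.im → aeval z F ≠ 0) :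
    F.Splits := by
  refine Splits.of_splits_map (algebraMap ℝ ℂ) (IsAlgClosed.splits _) fun z hz => ?_
  have hz0 : aeval z F = 0 := by
    simpa only [IsRoot, eval_map_algebraMap] using isRoot_of_mem_roots hz
  have hconj : aeval (conj z) F = 0 := by rw [aeval_conj, hz0, map_zero]
  refine ⟨z.re, Complex.ext rfl (le_antisymm ?_ ?_)⟩
  · by_contra! h
    exact hF (conj z) (by simpa using h) hconj
  · by_contra! h
    exact hF z (by simpa using h) hz0

lemma aeval_ne_zero_of_splits {F : ℝ[X]} (hF : F.Splits) (hF0 : F ≠ 0) {z : ℂ} (hz : z.im ≠ 0) :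
    aeval z F ≠ 0 := by
  intro h
  obtain ⟨x, rfl⟩ := hF.mem_range_of_isRoot hF0 (i := algebraMap ℝ ℂ) (x := z)
    (by rwa [IsRoot, eval_map_algebraMap])
  exact hz (Complex.ofReal_im x)

/-- In the upper half plane `Im (F' / F) < 0`, so `z + a + v F' / F` has no zero there. -/
lemma splits_X_add_C_mul_add_derivative {F : ℝ[X]} (hF : F.Splits) (a : ℝ) {v : ℝ} (hv : v ≤ 0) :
    ((X + C a) * F + C v * derivative F).Splits := by
  rcases eq_or_ne F 0 with rfl | hF0
  · simp
  refine splits_of_forall_aeval_ne_zero fun z hz hroot => ?_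
  have hz0 := aeval_ne_zero_of_splits hF hF0 hz.ne'
  have h : ((Complex.normSq (aeval z F) : ℝ) : ℂ) * (z + a) +
      v * (aeval z (derivative F) * conj (aeval z F)) = 0 := by
    simp only [map_add, map_mul, aeval_X, aeval_C, Complex.coe_algebraMap] at hroot
    rw [Complex.normSq_eq_conj_mul_self]
    linear_combination conj (aeval z F) * hroot
  have him := congrArg Complex.im h
  rw [Complex.add_im, Complex.im_ofReal_mul, Complex.im_ofReal_mul, Complex.add_im,
    Complex.ofReal_im, add_zero, Complex.zero_im] at him
  have hpos := mul_pos (Complex.normSq_pos.2 hz0) hz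
  have hnonneg := mul_nonneg_of_nonpos_of_nonpos hv
    (im_aeval_derivative_mul_conj_nonpos hF hz.le)
  linarith

lemma splits_heatFlow {P : ℝ[X]} (hP : P.Splits) {v : ℝ} (hv : v ≤ 0) :
    (heatFlow v P).Splits := by
  induction hP using splits_induction with
  | one => simpa only [← C_1, heatFlow_C] using Splits.C _
  | C_mul a P _ ih => simpa only [heatFlow_C_mul] using ih.C_mul a
  | X_add_C_mul a P _ ih =>
    have h := splits_X_add_C_mul_add_derivative ih a hv
    rwa [add_mul, add_right_comm, ← heatFlow_X_mul, ← heatFlow_C_mul, ← map_add, ← add_mul] at h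

/-- Laguerre's inequality. The form `F'² - F F''` obeys `W (F G) = F² W G + G² W F`. -/
lemma eval_mul_eval_derivative_derivative_le_sq {F : ℝ[X]} (hF : F.Splits) (x : ℝ) :
    F.eval x * (derivative (derivative F)).eval x ≤ (derivative F).eval x ^ 2 := by
  induction hF using splits_induction with
  | one => simp
  | C_mul a P _ ih =>
    simp only [derivative_mul, derivative_C, zero_mul, zero_add, eval_mul, eval_C]
    linear_combination a ^ 2 * ih
  | X_add_C_mul a P _ ih =>
    simp only [derivative_mul, derivative_add, derivative_X, derivative_C, derivative_one,
      derivative_zero, eval_add, eval_mul, eval_X, eval_C, eval_one, eval_zero]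
    linear_combination (x + a) ^ 2 * ih + sq_nonneg (P.eval x)

lemma eval_heatFlow_mul_le_sq {P : ℝ[X]} (hP : P.Splits) {v : ℝ} (hv : v ≤ 0) (x : ℝ) :
    (heatFlow v P).eval x * (heatFlow v (X * (X * P))).eval x ≤
      (heatFlow v (X * P)).eval x ^ 2 := by
  have hL := eval_mul_eval_derivative_derivative_le_sq (splits_heatFlow hP hv) x
  simp only [heatFlow_X_mul, derivative_add, derivative_mul, derivative_X, derivative_C, zero_mul,
    zero_add, one_mul, eval_add, eval_mul, eval_X, eval_C]
  linear_combination v ^ 2 * hL + mul_nonneg (neg_nonneg.2 hv) (sq_nonneg ((heatFlow v P).eval x))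

/-- The binary quadratic form `S ↦ heatFlow v (P * S ^ 2) x` on linear polynomials is isotropic,
its discriminant being controlled by Laguerre's inequality. -/
lemma exists_eval_heatFlow_mul_sq_eq_zero {P : ℝ[X]} (hP : P.Splits) {v : ℝ} (hv : v ≤ 0)
    (x : ℝ) :
    ∃ S : ℝ[X], S ≠ 0 ∧ S.natDegree ≤ 1 ∧ (heatFlow v (P * S ^ 2)).eval x = 0 := by
  set r₀ := (heatFlow v P).eval x with hr₀
  set r₁ := (heatFlow v (X * P)).eval x with hr₁
  set r₂ := (heatFlow v (X * (X * P))).eval x with hr₂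
  have hdisc : 0 ≤ r₁ ^ 2 - r₀ * r₂ := sub_nonneg.2 (eval_heatFlow_mul_le_sq hP hv x)
  by_cases h0 : r₀ = 0
  · exact ⟨1, one_ne_zero, by simp, by simpa using h0⟩
  set β := -r₁ + √(r₁ ^ 2 - r₀ * r₂)
  refine ⟨C r₀ * X + C β, fun h => h0 ?_, natDegree_linear_le, ?_⟩
  · simpa using congrArg (coeff · 1) h
  have hexp : P * (C r₀ * X + C β) ^ 2 =
      C (r₀ ^ 2) * (X * (X * P)) + C (2 * r₀ * β) * (X * P) + C (β ^ 2) * P := by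
    simp only [map_mul, map_pow, map_ofNat]
    ring
  rw [hexp]
  simp only [map_add, heatFlow_C_mul, eval_add, eval_C_mul, ← hr₀, ← hr₁, ← hr₂]
  linear_combination r₀ * Real.sq_sqrt hdisc

end Laguerre

section Functional

variable {R : Type*} [CommSemiring R]

/-- The functional `P ↦ (heatFlow v P) x`: the expectation under the normal law of mean `x` and
variance `v`, extended to variances of either sign. -/
noncomputable def gaussianFunctional (x v : R) : R[X] →ₗ[R] R :=
  leval x ∘ₗ heatFlow v

lemma gaussianFunctional_apply (x v : R) (P : R[X]) :
    gaussianFunctional x v P = (heatFlow v P).eval x :=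
  rfl

lemma gaussianFunctional_C (x v a : R) : gaussianFunctional x v (C a) = a := by
  rw [gaussianFunctional_apply, heatFlow_C, eval_C]

lemma gaussianFunctional_one (x v : R) : gaussianFunctional x v 1 = 1 :=
  gaussianFunctional_C x v 1

lemma gaussianFunctional_zero_var (x : R) (P : R[X]) : gaussianFunctional x 0 P = P.eval x := by
  rw [gaussianFunctional_apply, heatFlow_zero]

lemma gaussianFunctional_X_mul (x v : R) (P : R[X]) :
    gaussianFunctional x v (X * P) =
      x * gaussianFunctional x v P + v * gaussianFunctional x v (derivative P) := by
  simp only [gaussianFunctional_apply, heatFlow_X_mul, derivative_heatFlow, eval_add, eval_mul,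
    eval_X, eval_C]

lemma gaussianFunctional_X (x v : R) : gaussianFunctional x v X = x := by
  rw [gaussianFunctional_apply, heatFlow_X, eval_X]

lemma gaussianFunctional_X_pow_add_two (x v : R) (n : ℕ) :
    gaussianFunctional x v (X ^ (n + 2)) =
      x * gaussianFunctional x v (X ^ (n + 1)) + v * (n + 1) * gaussianFunctional x v (X ^ n) := by
  rw [pow_succ', gaussianFunctional_X_mul, derivative_X_pow_succ, ← smul_eq_C_mul, map_smul,
    smul_eq_mul, mul_assoc]

lemma gaussianFunctional_X_sq (x v : R) : gaussianFunctional x v (X ^ 2) = x ^ 2 + v := by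
  rw [gaussianFunctional_apply, heatFlow_X_sq, eval_add, eval_C, eval_pow, eval_X]

lemma eq_zero_of_gaussianFunctional_mul_eq_zero [IsDomain R] [CharZero R] {x v : R} (hv : v ≠ 0)
    {n : ℕ} {P : R[X]} (hP : P.natDegree ≤ n)
    (h : ∀ S : R[X], S.natDegree ≤ n → gaussianFunctional x v (P * S) = 0) : P = 0 := by
  have of_const {P : R[X]} (hP : P.natDegree = 0) (h1 : gaussianFunctional x v (P * 1) = 0) :
      P = 0 := by
    obtain ⟨a, rfl⟩ := natDegree_eq_zero.1 hP
    rw [mul_one, gaussianFunctional_C] at h1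
    rw [h1, C_0]
  induction n generalizing P with
  | zero => exact of_const (Nat.le_zero.1 hP) (h 1 natDegree_one.le)
  | succ n ih =>
    refine of_const (derivative_eq_zero.1 (ih ?_ fun S hS => ?_))
      (h 1 (natDegree_one.trans_le (Nat.zero_le _)))
    · exact (natDegree_derivative_le P).trans (by omega)
    have hXS := h (X * S) (natDegree_mul_le.trans (add_comm 1 n ▸ add_le_add natDegree_X_le hS))
    have hS0 := h S (hS.trans n.le_succ)
    have hS' := h (derivative S) ((natDegree_derivative_le S).trans (by omega))
    rw [mul_left_comm, gaussianFunctional_X_mul, derivative_mul, map_add, hS0, hS', mul_zero,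
      zero_add, add_zero] at hXS
    exact (mul_eq_zero.1 hXS).resolve_left hv

lemma gaussianFunctional_sub {R : Type*} [CommRing R] (x y v t : R) (P : R[X]) :
    gaussianFunctional (x - y) (v - t) P =
      gaussianFunctional x v ((heatFlow (-t) P).comp (X + C (-y))) := by
  rw [gaussianFunctional_apply, gaussianFunctional_apply, heatFlow_comp_X_add_C,
    heatFlow_heatFlow, eval_comp, eval_add, eval_X, eval_C, sub_eq_add_neg, sub_eq_add_neg]

end Functional

section Gaussian

lemma hasDerivAt_gaussianPDFReal (x : ℝ) {v : ℝ≥0} (hv : v ≠ 0) (z : ℝ) :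
    HasDerivAt (gaussianPDFReal x v) (-((z - x) / v) * gaussianPDFReal x v z) z := by
  have hv' : (v : ℝ) ≠ 0 := NNReal.coe_ne_zero.2 hv
  have hexponent : HasDerivAt (fun z : ℝ => -(z - x) ^ 2 / (2 * v)) (-((z - x) / v)) z := by
    refine (((((hasDerivAt_id z).sub_const x).pow 2).neg).div_const (2 * (v : ℝ))).congr_deriv ?_
    simp only [Nat.cast_ofNat, id_eq, Nat.add_one_sub_one, pow_one, mul_one]
    field_simp
  rw [gaussianPDFReal_def]
  refine (hexponent.exp.const_mul _).congr_deriv ?_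
  ring

lemma integrable_pow_gaussianReal (x : ℝ) (v : ℝ≥0) (n : ℕ) :
    Integrable (fun z => z ^ n) (gaussianReal x v) := by
  refine (integrable_norm_iff (by fun_prop)).1 ?_
  simpa using (memLp_id_gaussianReal (μ := x) (v := v) (n : ℝ≥0)).integrable_norm_pow'

lemma integrable_gaussianPDFReal_mul_eval (x : ℝ) {v : ℝ≥0} (hv : v ≠ 0) (P : ℝ[X]) :
    Integrable fun z => gaussianPDFReal x v z * P.eval z := by
  have h : Integrable (fun z => P.eval z) (gaussianReal x v) := by
    simp only [eval_eq_sum_range]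
    exact integrable_finsetSum _ fun n _ => (integrable_pow_gaussianReal x v n).const_mul _
  rw [gaussianReal_of_var_ne_zero x hv,
    integrable_withDensity_iff (measurable_gaussianPDF x v)
      (Filter.Eventually.of_forall fun _ => gaussianPDF_lt_top)] at h
  simpa only [toReal_gaussianPDF, mul_comm] using h

/-- Stein's identity, obtained by integrating the derivative of the density times `P`. -/
lemma integral_gaussianPDFReal_mul_eval_X_mul (x : ℝ) {v : ℝ≥0} (hv : v ≠ 0) (P : ℝ[X]) :
    ∫ z, gaussianPDFReal x v z * (X * P).eval z =
      x * (∫ z, gaussianPDFReal x v z * P.eval z) +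
        v * ∫ z, gaussianPDFReal x v z * (derivative P).eval z := by
  have hv' : (v : ℝ) ≠ 0 := NNReal.coe_ne_zero.2 hv
  have hint := integrable_gaussianPDFReal_mul_eval x hv
  have hderiv (z : ℝ) : HasDerivAt (fun z => v * (gaussianPDFReal x v z * P.eval z))
      (x * (gaussianPDFReal x v z * P.eval z) +
        v * (gaussianPDFReal x v z * (derivative P).eval z) -
        gaussianPDFReal x v z * (X * P).eval z) z := by
    refine (((hasDerivAt_gaussianPDFReal x hv z).mul (P.hasDerivAt z)).const_mul
      (v : ℝ)).congr_deriv ?_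
    rw [eval_mul, eval_X]
    field_simp
    ring
  have hsum := ((hint P).const_mul x).fun_add ((hint (derivative P)).const_mul v)
  have h := integral_eq_zero_of_hasDerivAt_of_integrable hderiv (hsum.sub (hint (X * P)))
    ((hint P).const_mul v)
  rw [integral_sub hsum (hint _), integral_add ((hint P).const_mul x) ((hint _).const_mul v),
    integral_const_mul, integral_const_mul] at h
  linarith

lemma integral_gaussianPDFReal_mul_eval (x : ℝ) {v : ℝ≥0} (hv : v ≠ 0) (P : ℝ[X]) :
    ∫ z, gaussianPDFReal x v z * P.eval z = gaussianFunctional x v P := by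
  induction h : P.natDegree using Nat.strong_induction_on generalizing P with
  | _ n ih =>
  have hC (a : ℝ) : ∫ z, gaussianPDFReal x v z * (C a).eval z = a := by
    simp only [eval_C, integral_mul_const, integral_gaussianPDFReal_eq_one x hv, one_mul]
  rcases n.eq_zero_or_pos with rfl | hn
  · obtain ⟨a, rfl⟩ := natDegree_eq_zero.1 h
    rw [hC, gaussianFunctional_C]
  have hdivX : P.divX.natDegree < n := by
    rw [natDegree_divX_eq_natDegree_tsub_one]
    omega
  have hint := integrable_gaussianPDFReal_mul_eval x hv
  have hsplit : ∫ z, gaussianPDFReal x v z * P.eval z =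
      (∫ z, gaussianPDFReal x v z * (X * P.divX).eval z) +
        ∫ z, gaussianPDFReal x v z * (C (P.coeff 0)).eval z := by
    rw [← integral_add (hint _) (hint _)]
    congr 1 with z
    rw [← mul_add, ← eval_add, X_mul_divX_add]
  rw [hsplit, integral_gaussianPDFReal_mul_eval_X_mul x hv, hC, ih _ hdivX _ rfl,
    ih _ ((natDegree_derivative_le _).trans_lt (by omega)) _ rfl, ← gaussianFunctional_X_mul]
  conv_rhs => rw [← X_mul_divX_add P, map_add, gaussianFunctional_C]

lemma integral_pos_of_finite_zeros {α : Type*} [MeasurableSpace α] {μ : Measure α}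
    [NullSingletonClass μ] [NeZero μ] {f : α → ℝ} (hf : Integrable f μ) (hnonneg : 0 ≤ f)
    (hzeros : {z | f z = 0}.Finite) : 0 < ∫ z, f z ∂μ := by
  refine (integral_pos_iff_support_of_nonneg hnonneg hf).2 (pos_iff_ne_zero.2 fun h => ?_)
  refine NeZero.ne μ (Measure.measure_univ_eq_zero.1 ?_)
  rw [← Set.compl_union_self {z | f z = 0}]
  exact measure_union_null h (hzeros.measure_zero μ)

lemma gaussianFunctional_pos (x : ℝ) {v : ℝ≥0} (hv : v ≠ 0) {P : ℝ[X]} (hP : P ≠ 0)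
    (hnonneg : ∀ z, 0 ≤ P.eval z) : 0 < gaussianFunctional x v P := by
  rw [← integral_gaussianPDFReal_mul_eval x hv]
  refine integral_pos_of_finite_zeros (integrable_gaussianPDFReal_mul_eval x hv P)
    (fun z => mul_nonneg (gaussianPDFReal_nonneg x v z) (hnonneg z))
    ((finite_setOfPred_isRoot hP).subset fun z hz => ?_)
  exact (mul_eq_zero.1 hz).resolve_left (gaussianPDFReal_pos x v z hv).ne'

lemma exists_mul_gaussianPDFReal_eq_exp (x : ℝ) {v : ℝ≥0} (hv : v ≠ 0) {c : ℝ} (hc : 0 < c) :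
    ∃ L : ℝ[X], L.natDegree ≤ 2 ∧ ∀ z, c * gaussianPDFReal x v z = Real.exp (L.eval z) := by
  have : (0 : ℝ) < v := NNReal.coe_pos.2 (pos_iff_ne_zero.2 hv)
  refine ⟨C (-(2 * v : ℝ)⁻¹) * (X - C x) ^ 2 + C (Real.log (c * (√(2 * Real.pi * v))⁻¹)), ?_,
    fun z => ?_⟩
  · compute_degree
  · rw [gaussianPDFReal, eval_add, eval_C, Real.exp_add, Real.exp_log (by positivity)]
    simp only [eval_mul, eval_C, eval_pow, eval_sub, eval_X]
    ring_nf

lemma eq_of_mul_gaussianPDFReal_eq {x y : ℝ} {v w : ℝ≥0} (hv : v ≠ 0) (hw : w ≠ 0) {c d : ℝ}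
    (hc : c ≠ 0) (h : ∀ z, c * gaussianPDFReal x v z = d * gaussianPDFReal y w z) :
    x = y ∧ v = w ∧ c = d := by
  have hcd : c = d := by
    simpa only [integral_const_mul, integral_gaussianPDFReal_eq_one _ hv,
      integral_gaussianPDFReal_eq_one _ hw, mul_one] using congrArg (∫ z, · z) (funext h)
  subst hcd
  have hpdf : gaussianPDF x v = gaussianPDF y w := by
    funext z
    rw [gaussianPDF, gaussianPDF, mul_left_cancel₀ hc (h z)]
  have hlaw : gaussianReal x v = gaussianReal y w := by
    rw [gaussianReal_of_var_ne_zero x hv, gaussianReal_of_var_ne_zero y hw, hpdf]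
  exact ⟨(gaussianReal_ext_iff.1 hlaw).1, (gaussianReal_ext_iff.1 hlaw).2, rfl⟩

end Gaussian

section Test

lemma eval_mul_eval_pos_of_forall_ne_zero {Q : ℝ[X]} (hQ : ∀ z, Q.eval z ≠ 0) (x y : ℝ) :
    0 < Q.eval x * Q.eval y := by
  by_contra! h
  have hzero : (0 : ℝ) ∈ Set.range fun z => Q.eval z := by
    rcases mul_nonpos_iff.1 h with ⟨hx, hy⟩ | ⟨hx, hy⟩
    · exact mem_range_of_exists_le_of_exists_ge Q.continuous ⟨y, hy⟩ ⟨x, hx⟩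
    · exact mem_range_of_exists_le_of_exists_ge Q.continuous ⟨x, hx⟩ ⟨y, hy⟩
  obtain ⟨z, hz⟩ := hzero
  exact hQ z hz

lemma exists_splits_mul_eval_pos {Q : ℝ[X]} (hQ : Q ≠ 0) :
    ∃ T : ℝ[X], T.Splits ∧ T.natDegree ≤ Q.natDegree ∧
      ∀ z, Q.eval z ≠ 0 → 0 < Q.eval z * T.eval z := by
  obtain ⟨Q', hfac, hdeg, hroots⟩ := exists_prod_multiset_X_sub_C_mul Q
  have hQ' : Q' ≠ 0 := by
    rintro rfl
    exact hQ (by rw [← hfac, mul_zero])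
  have hne (z : ℝ) : Q'.eval z ≠ 0 := fun h =>
    Multiset.notMem_zero z (hroots ▸ (mem_roots hQ').2 h)
  set L := (Q.roots.map fun a => X - C a).prod
  refine ⟨C (Q'.eval 0) * L, .C_mul (.multisetProd ?_) _, ?_, fun z hz => ?_⟩
  · simp only [Multiset.mem_map]
    rintro _ ⟨a, -, rfl⟩
    exact .X_sub_C a
  · exact (natDegree_C_mul_le _ _).trans
      ((natDegree_multiset_prod_X_sub_C_eq_card _).trans_le (by omega))
  · rw [← hfac, eval_mul] at hz ⊢
    have hsq : 0 < L.eval z ^ 2 := sq_pos_of_ne_zero (left_ne_zero_of_mul hz)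
    rw [eval_C_mul]
    calc 0 < L.eval z ^ 2 * (Q'.eval z * Q'.eval 0) :=
          mul_pos hsq (eval_mul_eval_pos_of_forall_ne_zero hne z 0)
      _ = L.eval z * Q'.eval z * (Q'.eval 0 * L.eval z) := by ring

/-- The functional `Λ` is detected by a real-rooted quadratic `T`: the quadratic form
`S ↦ Λ (T S²)` is anisotropic. -/
def HasQuadraticTest (Λ : ℝ[X] →ₗ[ℝ] ℝ) : Prop :=
  ∃ T : ℝ[X], T.Splits ∧ T.natDegree ≤ 2 ∧ ∀ S, S ≠ 0 → Λ (T * S ^ 2) ≠ 0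

lemma HasQuadraticTest.neg {Λ : ℝ[X] →ₗ[ℝ] ℝ} (h : HasQuadraticTest Λ) :
    HasQuadraticTest (-Λ) := by
  obtain ⟨T, hT, hdeg, hne⟩ := h
  exact ⟨T, hT, hdeg, fun S hS => neg_ne_zero.2 (hne S hS)⟩

lemma exp_sub_exp_mul_pos {a b t : ℝ} (h : 0 < (a - b) * t) :
    0 < (Real.exp a - Real.exp b) * t := by
  rcases pos_and_pos_or_neg_and_neg_of_mul_pos h with ⟨hab, ht⟩ | ⟨hab, ht⟩
  · exact mul_pos (sub_pos.2 (Real.exp_lt_exp.2 (sub_pos.1 hab))) ht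
  · exact mul_pos_of_neg_of_neg (sub_neg.2 (Real.exp_lt_exp.2 (sub_neg.1 hab))) ht

/-- The test polynomial changes sign with the difference of the log-densities. -/
lemma hasQuadraticTest_sub (x y : ℝ) {v w : ℝ≥0} (hv : v ≠ 0) (hw : w ≠ 0) {c d : ℝ}
    (hc : 0 < c) (hd : 0 < d) (hne : ¬ (x = y ∧ v = w ∧ c = d)) :
    HasQuadraticTest (c • gaussianFunctional x v - d • gaussianFunctional y w) := by
  obtain ⟨L, hLdeg, hL⟩ := exists_mul_gaussianPDFReal_eq_exp x hv hc
  obtain ⟨M, hMdeg, hM⟩ := exists_mul_gaussianPDFReal_eq_exp y hw hd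
  have hLM : L - M ≠ 0 := fun h => hne <| eq_of_mul_gaussianPDFReal_eq hv hw hc.ne' fun z => by
    rw [hL, hM, sub_eq_zero.1 h]
  obtain ⟨T, hT, hTdeg, hpos⟩ := exists_splits_mul_eval_pos hLM
  refine ⟨T, hT, hTdeg.trans ((natDegree_sub_le _ _).trans (max_le hLdeg hMdeg)),
    fun S hS => ne_of_gt ?_⟩
  have hintx := (integrable_gaussianPDFReal_mul_eval x hv (T * S ^ 2)).const_mul c
  have hinty := (integrable_gaussianPDFReal_mul_eval y hw (T * S ^ 2)).const_mul d
  have hdensity (z : ℝ) : c * (gaussianPDFReal x v z * (T * S ^ 2).eval z) -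
      d * (gaussianPDFReal y w z * (T * S ^ 2).eval z) =
      (Real.exp (L.eval z) - Real.exp (M.eval z)) * T.eval z * S.eval z ^ 2 := by
    rw [← hL, ← hM, eval_mul, eval_pow]
    ring
  have hsign (z : ℝ) (hz : (L - M).eval z ≠ 0) :
      0 < (Real.exp (L.eval z) - Real.exp (M.eval z)) * T.eval z :=
    exp_sub_exp_mul_pos (by simpa only [eval_sub] using hpos z hz)
  simp only [LinearMap.sub_apply, LinearMap.smul_apply, smul_eq_mul,
    ← integral_gaussianPDFReal_mul_eval x hv, ← integral_gaussianPDFReal_mul_eval y hw]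
  rw [← integral_const_mul, ← integral_const_mul, ← integral_sub hintx hinty]
  refine integral_pos_of_finite_zeros (hintx.sub hinty) (fun z => ?_)
    ((finite_setOfPred_isRoot (mul_ne_zero hLM hS)).subset fun z hz => ?_)
  · simp only [Pi.zero_apply, hdensity]
    refine mul_nonneg ?_ (sq_nonneg _)
    by_cases hz : (L - M).eval z = 0
    · rw [eval_sub, sub_eq_zero] at hz
      rw [hz, sub_self, zero_mul]
    · exact (hsign z hz).le
  · rw [Set.mem_ofPred_eq, hdensity] at hz
    rw [Set.mem_ofPred_eq, IsRoot, eval_mul]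
    by_contra h
    obtain ⟨hLMz, hSz⟩ := mul_ne_zero_iff.1 h
    exact mul_ne_zero (hsign z hLMz).ne' (pow_ne_zero 2 hSz) hz

lemma gaussianFunctional_sq_pos (x : ℝ) {v : ℝ≥0} (hv : v ≠ 0) {S : ℝ[X]} (hS : S ≠ 0) :
    0 < gaussianFunctional x v (S ^ 2) :=
  gaussianFunctional_pos x hv (pow_ne_zero 2 hS) fun z => by
    rw [eval_pow]
    exact sq_nonneg _

lemma hasQuadraticTest_eval_add (x y : ℝ) {w : ℝ≥0} (hw : w ≠ 0) (c : ℝ) {d : ℝ} (hd : d ≠ 0) :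
    HasQuadraticTest (c • gaussianFunctional x 0 + d • gaussianFunctional y w) := by
  refine ⟨(X - C x) ^ 2, (Splits.X_sub_C x).pow 2, ?_, fun S hS => ?_⟩
  · rw [natDegree_pow, natDegree_X_sub_C]
  have hx : gaussianFunctional x 0 (((X - C x) * S) ^ 2) = 0 := by
    simp [gaussianFunctional_zero_var]
  have hy := gaussianFunctional_sq_pos y hw (mul_ne_zero (X_sub_C_ne_zero x) hS)
  rw [← mul_pow, LinearMap.add_apply, LinearMap.smul_apply, hx, smul_zero, zero_add]
  exact smul_ne_zero hd hy.ne'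

lemma hasQuadraticTest_add_of_ne_zero (x y : ℝ) {v w : ℝ≥0} (hv : v ≠ 0) (hw : w ≠ 0) {c d : ℝ}
    (hc : c ≠ 0) (hd : d ≠ 0) (hne : ¬ (x = y ∧ v = w ∧ c + d = 0)) :
    HasQuadraticTest (c • gaussianFunctional x v + d • gaussianFunctional y w) := by
  wlog hc0 : 0 < c generalizing c d
  · have h := (this (neg_ne_zero.2 hc) (neg_ne_zero.2 hd)
      (fun h => hne ⟨h.1, h.2.1, by linarith⟩) (by grind)).neg
    convert h using 1
    module
  rcases hd.lt_or_gt with hd0 | hd0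
  · have h := hasQuadraticTest_sub x y hv hw hc0 (neg_pos.2 hd0)
      fun h => hne ⟨h.1, h.2.1, by linarith⟩
    convert h using 1
    module
  · refine ⟨1, .one, natDegree_one.trans_le (Nat.zero_le 2), fun S hS => ne_of_gt ?_⟩
    rw [one_mul]
    exact add_pos (mul_pos hc0 (gaussianFunctional_sq_pos x hv hS))
      (mul_pos hd0 (gaussianFunctional_sq_pos y hw hS))

lemma hasQuadraticTest_add (x y : ℝ) {v w : ℝ≥0} (hvw : ¬ (v = 0 ∧ w = 0)) {c d : ℝ}
    (hc : c ≠ 0) (hd : d ≠ 0) (hne : ¬ (x = y ∧ v = w ∧ c + d = 0)) :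
    HasQuadraticTest (c • gaussianFunctional x v + d • gaussianFunctional y w) := by
  rcases eq_or_ne v 0 with rfl | hv
  · exact hasQuadraticTest_eval_add x y (fun hw => hvw ⟨rfl, hw⟩) c hd
  rcases eq_or_ne w 0 with rfl | hw
  · rw [add_comm]
    exact hasQuadraticTest_eval_add y x hv d hc
  · exact hasQuadraticTest_add_of_ne_zero x y hv hw hc hd hne

end Test

section Rigidity

lemma HasQuadraticTest.exists_ne_zero {Λ : ℝ[X] →ₗ[ℝ] ℝ} (hΛ : HasQuadraticTest Λ) (x : ℝ)
    {u : ℝ} (hu : u ≤ 0) :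
    ∃ P : ℝ[X], P.natDegree ≤ 6 ∧ P.eval 0 = 0 ∧ gaussianFunctional x u P = 0 ∧ Λ P ≠ 0 := by
  obtain ⟨T, hT, hTdeg, hne⟩ := hΛ
  obtain ⟨S, hS0, hSdeg, hS⟩ := exists_eval_heatFlow_mul_sq_eq_zero (hT.mul (Splits.X.pow 2)) hu x
  refine ⟨T * (X * S) ^ 2, ?_, by simp, ?_, hne _ (mul_ne_zero X_ne_zero hS0)⟩
  · have hXS : (X * S).natDegree ≤ 2 :=
      natDegree_mul_le.trans (add_le_add natDegree_X_le hSdeg)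
    have hsq : ((X * S) ^ 2).natDegree ≤ 2 * 2 := natDegree_pow_le_of_le 2 hXS
    exact natDegree_mul_le.trans (add_le_add hTdeg hsq)
  · rwa [gaussianFunctional_apply, mul_pow, ← mul_assoc]

lemma exists_gaussianFunctional_ne_zero_of_eval_eq_zero {R : Type*} [CommRing R] [IsDomain R]
    [CharZero R] (x : R) {u : R} (hu : u ≠ 0) (s : Finset R) :
    ∃ P : R[X], P.natDegree ≤ 2 * s.card ∧ (∀ y ∈ s, P.eval y = 0) ∧
      gaussianFunctional x u P ≠ 0 := by
  set N : R[X] := ∏ y ∈ s, (X - C y) with hN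
  have hNdeg : N.natDegree = s.card := natDegree_finsetProd_X_sub_C_eq_card s id
  by_contra! hzero
  have hN0 : N ≠ 0 := Finset.prod_ne_zero_iff.2 fun y _ => X_sub_C_ne_zero y
  refine hN0 (eq_zero_of_gaussianFunctional_mul_eq_zero (x := x) hu hNdeg.le fun S hS => ?_)
  refine hzero _ (natDegree_mul_le.trans (by omega)) fun y hy => ?_
  rw [eval_mul, hN, eval_prod, Finset.prod_eq_zero hy (by simp), zero_mul]

lemma eq_zero_or_eq_of_gaussianFunctional_comb_eq_zero {b c d x y z u v w : ℝ}
    (hu : u ≤ 0) (hv : 0 ≤ v) (hw : 0 ≤ w) (hb : b ≠ 0) (hc : c ≠ 0) (hd : d ≠ 0)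
    (h : ∀ P : ℝ[X], P.natDegree ≤ 6 → P.eval 0 = 0 →
      b * gaussianFunctional x u P + c * gaussianFunctional y v P +
        d * gaussianFunctional z w P = 0) :
    (u = 0 ∧ v = 0 ∧ w = 0) ∨ (y = z ∧ v = w ∧ c + d = 0) := by
  lift v to ℝ≥0 using hv
  lift w to ℝ≥0 using hw
  norm_cast
  refine or_iff_not_imp_right.2 fun hne => ?_
  by_cases hvw : v = 0 ∧ w = 0
  · obtain ⟨rfl, rfl⟩ := hvw
    refine ⟨by_contra fun hu0 => ?_, rfl, rfl⟩
    obtain ⟨P, hdeg, hroot, hP⟩ :=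
      exists_gaussianFunctional_ne_zero_of_eval_eq_zero x hu0 {0, y, z}
    have hcard : ({0, y, z} : Finset ℝ).card ≤ 3 := Finset.card_le_three
    have h0 := h P (by omega) (hroot 0 (by simp))
    simp only [NNReal.coe_zero, gaussianFunctional_zero_var, hroot y (by simp),
      hroot z (by simp), mul_zero, add_zero] at h0
    exact mul_ne_zero hb hP h0
  · obtain ⟨P, hdeg, hroot, hx, hP⟩ := (hasQuadraticTest_add y z hvw hc hd hne).exists_ne_zero x hu
    have h0 := h P hdeg hroot
    rw [hx, mul_zero, zero_add] at h0
    exact absurd h0 hP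

end Rigidity

section Mixture

variable {ι : Type*} [Fintype ι]

lemma sum_mul_gaussianFunctional_eq_sum_mul_eval_zero {R : Type*} [CommSemiring R]
    {a x v : ι → R} {r : ℕ}
    (h : ∀ s, 1 ≤ s → s ≤ r → ∑ l, a l * gaussianFunctional (x l) (v l) (X ^ s) = 0)
    {P : R[X]} (hP : P.natDegree ≤ r) :
    ∑ l, a l * gaussianFunctional (x l) (v l) P = (∑ l, a l) * P.eval 0 := by
  refine induction_with_natDegree_le
    (fun P => ∑ l, a l * gaussianFunctional (x l) (v l) P = (∑ l, a l) * P.eval 0) r (by simp)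
    (fun s b _ hs => ?_) (fun P Q _ _ hP hQ => ?_) P hP
  · simp only [← smul_eq_C_mul, map_smul, smul_eq_mul, mul_left_comm _ b, ← Finset.mul_sum]
    rcases s.eq_zero_or_pos with rfl | hs0
    · simp [← C_1, gaussianFunctional_C, mul_comm, -map_one]
    · simp [h s hs0 hs, hs0.ne']
  · simp only [map_add, mul_add, Finset.sum_add_distrib, eval_add, hP, hQ]

lemma sum_mul_gaussianFunctional_sub {R : Type*} [CommRing R] {a x v : ι → R} {r : ℕ}
    (h : ∀ s, 1 ≤ s → s ≤ r → ∑ l, a l * gaussianFunctional (x l) (v l) (X ^ s) = 0)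
    (y t : R) {P : R[X]} (hP : P.natDegree ≤ r) :
    ∑ l, a l * gaussianFunctional (x l - y) (v l - t) P =
      (∑ l, a l) * gaussianFunctional (-y) (-t) P := by
  have hdeg : ((heatFlow (-t) P).comp (X + C (-y))).natDegree ≤ r := by
    refine natDegree_comp_le.trans ?_
    calc _ ≤ P.natDegree * 1 :=
          Nat.mul_le_mul (natDegree_heatFlow_le _ _) (natDegree_add_C.trans_le natDegree_X_le)
      _ ≤ r := by rwa [mul_one]
  have hsum := sum_mul_gaussianFunctional_eq_sum_mul_eval_zero h hdeg
  rw [← gaussianFunctional_zero_var] at hsum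
  simpa only [← gaussianFunctional_sub, zero_sub] using hsum

lemma exists_nonpos_of_sum_mul_sq_add_eq_zero [Nonempty ι]
    {a x v : ι → ℝ} (ha : ∀ l, 0 < a l) (h : ∑ l, a l * (x l ^ 2 + v l) = 0) : ∃ l, v l ≤ 0 := by
  by_contra! hv
  have hpos (l : ι) : 0 < a l * (x l ^ 2 + v l) :=
    mul_pos (ha l) (add_pos_of_nonneg_of_pos (sq_nonneg _) (hv l))
  exact (Finset.sum_pos (fun l _ => hpos l) Finset.univ_nonempty).ne' h

lemma eq_zero_of_sum_mul_sq_eq_zero {a x : ι → ℝ} (ha : ∀ l, 0 < a l)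
    (h : ∑ l, a l * x l ^ 2 = 0) (l : ι) : x l = 0 := by
  have hnonneg (l : ι) : 0 ≤ a l * x l ^ 2 := mul_nonneg (ha l).le (sq_nonneg _)
  have hl := (Finset.sum_eq_zero_iff_of_nonneg fun l _ => hnonneg l).1 h l (Finset.mem_univ l)
  exact pow_eq_zero_iff two_ne_zero |>.1 ((mul_eq_zero.1 hl).resolve_left (ha l).ne')

lemma variances_eq_zero_of_monotone {a x v : Fin 3 → ℝ} (ha : ∀ l, 0 < a l) (hv : Monotone v)
    (hv0 : v 0 ≤ 0)
    (h : ∀ s, 1 ≤ s → s ≤ 6 → ∑ l, a l * gaussianFunctional (x l) (v l) (X ^ s) = 0) (l : Fin 3) :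
    v l = 0 := by
  suffices h0 : v 0 = 0 ∧ v 1 = 0 ∧ v 2 = 0 by
    fin_cases l
    exacts [h0.1, h0.2.1, h0.2.2]
  have hv01 : v 0 ≤ v 1 := hv (by decide)
  have hv12 : v 1 ≤ v 2 := hv (by decide)
  rcases le_or_gt (v 1) 0 with hv1 | hv1
  · have hne : -∑ l, a l ≠ 0 :=
      (neg_neg_of_pos (Finset.sum_pos (fun l _ => ha l) Finset.univ_nonempty)).ne
    have hcomb (P : ℝ[X]) (hP : P.natDegree ≤ 6) (hroot : P.eval 0 = 0) :
        a 0 * gaussianFunctional (x 0 - x 1) (v 0 - v 1) P +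
          a 2 * gaussianFunctional (x 2 - x 1) (v 2 - v 1) P +
          (-∑ l, a l) * gaussianFunctional (-x 1) (-v 1) P = 0 := by
      have hsum := sum_mul_gaussianFunctional_sub h (x 1) (v 1) hP
      have hpoint : gaussianFunctional (x 1 - x 1) (v 1 - v 1) P = 0 := by
        rw [sub_self, sub_self, gaussianFunctional_zero_var, hroot]
      rw [Fin.sum_univ_three (fun l => a l * gaussianFunctional _ _ P), hpoint] at hsum
      linear_combination hsum
    rcases eq_zero_or_eq_of_gaussianFunctional_comb_eq_zero (sub_nonpos.2 hv01)
      (sub_nonneg.2 hv12) (neg_nonneg.2 hv1) (ha 0).ne' (ha 2).ne' hne hcomb with h0 | h0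
    · exact ⟨by linarith, by linarith, by linarith⟩
    · have hcancel := h0.2.2
      rw [Fin.sum_univ_three] at hcancel
      linarith [ha 0, ha 1]
  · have hcomb (P : ℝ[X]) (hP : P.natDegree ≤ 6) (hroot : P.eval 0 = 0) :
        a 0 * gaussianFunctional (x 0) (v 0) P + a 1 * gaussianFunctional (x 1) (v 1) P +
          a 2 * gaussianFunctional (x 2) (v 2) P = 0 := by
      rw [← Fin.sum_univ_three (fun l => a l * gaussianFunctional (x l) (v l) P),
        sum_mul_gaussianFunctional_eq_sum_mul_eval_zero h hP, hroot, mul_zero]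
    rcases eq_zero_or_eq_of_gaussianFunctional_comb_eq_zero hv0 hv1.le (hv1.le.trans hv12)
      (ha 0).ne' (ha 1).ne' (ha 2).ne' hcomb with h0 | h0
    · exact h0
    · exact absurd h0.2.2 (add_pos (ha 1) (ha 2)).ne'

lemma means_eq_zero_of_monotone {a x v : Fin 3 → ℝ} (ha : ∀ l, 0 < a l) (hv : Monotone v)
    (h : ∀ s, 1 ≤ s → s ≤ 6 → ∑ l, a l * gaussianFunctional (x l) (v l) (X ^ s) = 0) (l : Fin 3) :
    x l = 0 := by
  have hsecond : ∑ l, a l * (x l ^ 2 + v l) = 0 := by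
    simpa only [gaussianFunctional_X_sq] using h 2 (by norm_num) (by norm_num)
  obtain ⟨k, hk⟩ := exists_nonpos_of_sum_mul_sq_add_eq_zero ha hsecond
  have hv0 := variances_eq_zero_of_monotone ha hv ((hv k.zero_le).trans hk) h
  simp only [hv0, add_zero] at hsecond
  exact eq_zero_of_sum_mul_sq_eq_zero ha hsecond l

lemma means_eq_zero {a x v : Fin 3 → ℝ} (ha : ∀ l, 0 < a l)
    (h : ∀ s, 1 ≤ s → s ≤ 6 → ∑ l, a l * gaussianFunctional (x l) (v l) (X ^ s) = 0) (l : Fin 3) :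
    x l = 0 := by
  set σ := Tuple.sort v
  have hσ := means_eq_zero_of_monotone (a := a ∘ σ) (x := x ∘ σ) (fun l => ha (σ l))
    (Tuple.monotone_sort v) fun s h1 h6 => by
      rw [← h s h1 h6]
      exact Equiv.sum_comp σ fun l => a l * gaussianFunctional (x l) (v l) (X ^ s)
  simpa using hσ (σ.symm l)

end Mixture

section BarSystem

/-- The pairs `(n₁, n₂)` with `n₁ + 2 n₂ = s`, in the form in which they index `barEq`. -/
def pairsOfWeight (s : ℕ) : Finset (ℕ × ℕ) :=
  (Finset.range (s + 1) ×ˢ Finset.range (s + 1)).filter fun nn => nn.1 + 2 * nn.2 = s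

lemma mem_pairsOfWeight {s : ℕ} {nn : ℕ × ℕ} : nn ∈ pairsOfWeight s ↔ nn.1 + 2 * nn.2 = s := by
  simp only [pairsOfWeight, Finset.mem_filter, Finset.mem_product, Finset.mem_range]
  omega

lemma sum_pairsOfWeight_succ {M : Type*} [AddCommMonoid M] {f : ℕ × ℕ → M}
    (hf : ∀ j, f (0, j) = 0) (s : ℕ) :
    ∑ nn ∈ pairsOfWeight (s + 1), f nn = ∑ nn ∈ pairsOfWeight s, f (nn.1 + 1, nn.2) := by
  refine (Finset.sum_of_injOn (fun nn : ℕ × ℕ => (nn.1 + 1, nn.2)) (fun _ _ _ _ h => ?_)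
    (fun nn h => ?_) (fun nn h h' => ?_) fun _ _ => rfl).symm
  · simpa [Prod.ext_iff] using h
  · simp only [Finset.mem_coe, mem_pairsOfWeight] at h ⊢
    omega
  · rcases nn with ⟨_ | i, j⟩
    · exact hf j
    · simp only [Set.mem_image, Finset.mem_coe, mem_pairsOfWeight, Prod.exists] at h h'
      exact absurd ⟨i, j, by omega, rfl⟩ h'

lemma sum_pairsOfWeight_add_two {M : Type*} [AddCommMonoid M] {f : ℕ × ℕ → M}
    (hf : ∀ i, f (i, 0) = 0) (s : ℕ) :
    ∑ nn ∈ pairsOfWeight (s + 2), f nn = ∑ nn ∈ pairsOfWeight s, f (nn.1, nn.2 + 1) := by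
  refine (Finset.sum_of_injOn (fun nn : ℕ × ℕ => (nn.1, nn.2 + 1)) (fun _ _ _ _ h => ?_)
    (fun nn h => ?_) (fun nn h h' => ?_) fun _ _ => rfl).symm
  · simpa [Prod.ext_iff] using h
  · simp only [Finset.mem_coe, mem_pairsOfWeight] at h ⊢
    omega
  · rcases nn with ⟨i, _ | j⟩
    · exact hf i
    · simp only [Set.mem_image, Finset.mem_coe, mem_pairsOfWeight, Prod.exists] at h h'
      exact absurd ⟨i, j, by omega, rfl⟩ h'

variable {K : Type*} [Field K] [CharZero K]

lemma succ_mul_pow_succ_div_factorial_succ (x : K) (n : ℕ) :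
    ((n + 1 : ℕ) : K) * (x ^ (n + 1) / (n + 1).factorial) = x * (x ^ n / n.factorial) := by
  have h := Nat.cast_ne_zero (R := K).2 n.succ_ne_zero
  rw [Nat.factorial_succ, Nat.cast_mul, ← mul_div_assoc, mul_div_mul_left _ _ h, pow_succ',
    mul_div_assoc]

/-- The generating function `exp (x t + w t²)` has logarithmic derivative `x + 2 w t`. -/
lemma add_two_mul_sum_pairsOfWeight (x w : K) (s : ℕ) :
    (s + 2) *
        ∑ nn ∈ pairsOfWeight (s + 2), x ^ nn.1 / nn.1.factorial * (w ^ nn.2 / nn.2.factorial) =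
      x * ∑ nn ∈ pairsOfWeight (s + 1), x ^ nn.1 / nn.1.factorial * (w ^ nn.2 / nn.2.factorial) +
      2 * w * ∑ nn ∈ pairsOfWeight s, x ^ nn.1 / nn.1.factorial * (w ^ nn.2 / nn.2.factorial) := by
  set e : K → ℕ → K := fun y n => y ^ n / n.factorial
  have he (y : K) (n : ℕ) : ((n + 1 : ℕ) : K) * e y (n + 1) = y * e y n :=
    succ_mul_pow_succ_div_factorial_succ y n
  calc (s + 2) * ∑ nn ∈ pairsOfWeight (s + 2), e x nn.1 * e w nn.2
      = ∑ nn ∈ pairsOfWeight (s + 2), (nn.1 * e x nn.1) * e w nn.2 +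
        ∑ nn ∈ pairsOfWeight (s + 2), 2 * e x nn.1 * (nn.2 * e w nn.2) := by
        rw [← Finset.sum_add_distrib, Finset.mul_sum]
        refine Finset.sum_congr rfl fun nn h => ?_
        have hs : (nn.1 + 2 * nn.2 : K) = s + 2 := mod_cast mem_pairsOfWeight.1 h
        rw [← hs]
        ring
    _ = ∑ nn ∈ pairsOfWeight (s + 1), (x * e x nn.1) * e w nn.2 +
        ∑ nn ∈ pairsOfWeight s, 2 * e x nn.1 * (w * e w nn.2) := by
      rw [sum_pairsOfWeight_succ (by simp), sum_pairsOfWeight_add_two (by simp)]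
      simp only [he]
    _ = x * ∑ nn ∈ pairsOfWeight (s + 1), e x nn.1 * e w nn.2 +
        2 * w * ∑ nn ∈ pairsOfWeight s, e x nn.1 * e w nn.2 := by
      rw [Finset.mul_sum, Finset.mul_sum]
      congr 1 <;> exact Finset.sum_congr rfl fun _ _ => by ring

lemma gaussianFunctional_X_pow (x w : K) (s : ℕ) :
    gaussianFunctional x (2 * w) (X ^ s) = s.factorial * ∑ nn ∈ pairsOfWeight s,
      x ^ nn.1 / nn.1.factorial * (w ^ nn.2 / nn.2.factorial) := by
  induction s using Nat.twoStepInduction with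
  | zero =>
    rw [pow_zero, gaussianFunctional_one, show pairsOfWeight 0 = {(0, 0)} from rfl]
    simp
  | one =>
    rw [pow_one, gaussianFunctional_X, show pairsOfWeight 1 = {(1, 0)} from rfl]
    simp
  | more s ih ih' =>
    rw [gaussianFunctional_X_pow_add_two, ih, ih', Nat.factorial_succ (s + 1), Nat.factorial_succ s]
    push_cast
    linear_combination -((s : K) + 1) * s.factorial * add_two_mul_sum_pairsOfWeight x w s

lemma factorial_mul_barEq (m : ℕ) (p q1 q2 : Fin m → ℝ) (s : ℕ) :
    s.factorial * barEq m p q1 q2 s =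
      ∑ l, p l ^ 2 * gaussianFunctional (q1 l) (2 * q2 l) (X ^ s) := by
  rw [barEq, Finset.mul_sum]
  refine Finset.sum_congr rfl fun l _ => ?_
  rw [gaussianFunctional_X_pow, mul_left_comm, pairsOfWeight]
  congr 1
  rw [Finset.mul_sum]
  simp only [div_mul_div_comm, mul_div_assoc, mul_assoc]

lemma barEq_eq_zero_iff {m : ℕ} {p q1 q2 : Fin m → ℝ} {s : ℕ} :
    barEq m p q1 q2 s = 0 ↔ ∑ l, p l ^ 2 * gaussianFunctional (q1 l) (2 * q2 l) (X ^ s) = 0 := by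
  rw [← factorial_mul_barEq, mul_eq_zero_iff_left (Nat.cast_ne_zero.2 s.factorial_ne_zero)]

lemma not_barSol_three_six : ¬ barSol 3 6 := by
  rintro ⟨p, q1, q2, hp, ⟨l, hl⟩, h⟩
  exact hl (means_eq_zero (fun l => sq_pos_of_ne_zero (hp l))
    (fun s h1 h6 => barEq_eq_zero_iff.1 (h s h1 h6)) l)

/-- The nodes and weights of the three-point Gauss–Hermite rule. -/
lemma barSol_three_five : barSol 3 5 := by
  refine ⟨![2, 1, 1], ![0, 1, -1], fun _ => -1 / 6, ?_, ⟨1, by simp⟩, fun s h1 h5 => ?_⟩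
  · intro l
    fin_cases l <;> simp
  · rw [barEq_eq_zero_iff, Fin.sum_univ_three]
    interval_cases s <;>
      simp [gaussianFunctional_X_pow_add_two, gaussianFunctional_X, gaussianFunctional_one] <;>
      norm_num

lemma barSol.mono {m r s : ℕ} (h : barSol m s) (hrs : r ≤ s) : barSol m r := by
  obtain ⟨p, q1, q2, hp, hq, hs⟩ := h
  exact ⟨p, q1, q2, hp, hq, fun k h1 hk => hs k h1 (hk.trans hrs)⟩

end BarSystem

/-- `r̄(3) = 6`: the bar-system of order `(3, 6)` admits no non-trivial solution,
while the bar-system of order `(3, 5)` does admit a non-trivial solution. -/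
theorem rbar_three_eq_six : rbar 3 = 6 ∧ ¬ barSol 3 6 ∧ barSol 3 5 := by
  refine ⟨?_, not_barSol_three_six, barSol_three_five⟩
  have hmem : 6 ∈ {r : ℕ | 1 ≤ r ∧ ¬ barSol 3 r} := ⟨by norm_num, not_barSol_three_six⟩
  refine le_antisymm (Nat.sInf_le hmem) (le_csInf ⟨6, hmem⟩ fun r hr => ?_)
  by_contra! hlt
  exact hr.2 (barSol_three_five.mono (by omega))
end
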